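/- arXiv:1508.04102 — 2 statements merged into one kernel-verified Lean document; each statement's English description precedes it below -/
import Mathlib

section
/- The system of coupled pendulums φ̇ᵢ = pᵢ, ṗᵢ = −(ḧ(t)/lᵢ) cos φᵢ + (g/lᵢ) sin φᵢ − γᵢ pᵢ + (1/(mᵢ lᵢ)) ∑_{j≠i} (F_{ij}, e_{φᵢ}), i = 1,…,n, has a T-periodic solution: there exist functions φᵢ : ℝ → ℝ, pᵢ : ℝ → ℝ solving the system and satisfying φᵢ(t + T) = φᵢ(t), pᵢ(t + T) = pᵢ(t), and moreover φᵢ(t) ∈ (−π/2, π/2) for all t ∈ ℝ and all i = 1,…,n (i.e. along this solution every pendulum always remains strictly above the horizontal line through the pivots). -/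
open Real

/-- Euclidean inner product on ℝ². -/
def dot2 (u v : ℝ × ℝ) : ℝ := u.1 * v.1 + u.2 * v.2

/-- Euclidean norm on ℝ². -/
noncomputable def norm2 (u : ℝ × ℝ) : ℝ := Real.sqrt (dot2 u u)

/-- Position of the bob of a pendulum with pivot abscissa `σ + h t`, length `l`
and angle `φ` measured from the upward vertical. -/
noncomputable def pendBob (σ : ℝ) (h : ℝ → ℝ) (l : ℝ) (t φ : ℝ) : ℝ × ℝ :=
  (σ + h t + l * Real.sin φ, l * Real.cos φ)

/-- The unit vector `e_φ = (cos φ, −sin φ)`. -/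
noncomputable def ephi (φ : ℝ) : ℝ × ℝ := (Real.cos φ, -Real.sin φ)

/-- `(F_{ij}, e_{φᵢ})`, the component of the repelling force
`F_{ij} = f_{ij}(φᵢ,φⱼ)·(rᵢ−rⱼ)/|rᵢ−rⱼ|` along `e_{φᵢ}`. -/
noncomputable def interDot (σi σj : ℝ) (h : ℝ → ℝ) (li lj : ℝ)
    (fij : ℝ → ℝ → ℝ) (t φi φj : ℝ) : ℝ :=
  fij φi φj / norm2 (pendBob σi h li t φi - pendBob σj h lj t φj) *
    dot2 (pendBob σi h li t φi - pendBob σj h lj t φj) (ephi φi)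

/-- Right-hand side of the equation for `ṗᵢ` of the `i`-th pendulum:
`−(ḧ/lᵢ)cos φᵢ + (g/lᵢ) sin φᵢ − γᵢ pᵢ + (1/(mᵢ lᵢ)) ∑_{j≠i} (F_{ij}, e_{φᵢ})`. -/
noncomputable def pendRHS (n : ℕ) (g : ℝ) (m l γ σ : Fin n → ℝ) (h : ℝ → ℝ)
    (f : Fin n → Fin n → ℝ → ℝ → ℝ) (i : Fin n) (t : ℝ)
    (φ : Fin n → ℝ) (pi : ℝ) : ℝ :=
  -(deriv (deriv h) t) / l i * Real.cos (φ i) + g / l i * Real.sin (φ i)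
    - γ i * pi
    + (1 / (m i * l i)) *
        ∑ j ∈ Finset.univ.erase i, interDot (σ i) (σ j) h (l i) (l j) (f i j) t (φ i) (φ j)

/-!
Clamp the angles in the forcing to `[-π/2, π/2]` and add `κ (φ - clamp φ)` with `κ > 0`. Then the
system reads `φ'' + γ φ' - κ φ = F(t, φ)` with `F` bounded, and the left-hand side factors as
`(d/dt - a)(d/dt - b)` with `a, b ≠ 0`. Each factor has a compact inverse on continuous
`T`-periodic functions, so Schauder's theorem provides a periodic solution. Where an angle attains
its maximum, `φ' = 0`; if that maximum were at least `π/2`, the inertial force `-h''/l cos φ` would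
vanish there, gravity would push outwards, the repulsion would not push inwards, and the correction
term would be nonnegative, so `φ'' > 0`, which is impossible at a maximum. The same holds at minima,
so the angles never leave `(-π/2, π/2)` and the clamping is inactive.

Schauder's theorem reduces to finite dimensions. There a smooth map without fixed points would yield
a `C¹` retraction `r` of a ball onto its sphere. Now `t ↦ ∫ det (t + (Dr - 1))` is a polynomial, and
for large `t` it equals `t ^ dim` times the volume of the ball, because `x + t⁻¹ (r x - x)` is then
a bijection of the ball. At `t = 1` this gives `∫ det Dr = vol ≠ 0`, whereas `det Dr = 0` since `r`
takes values in the sphere.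
-/

section Brouwer

open Set Filter Topology Metric MeasureTheory Module
open scoped Polynomial NNReal

theorem exists_polynomial_eval_eq_integral {α : Type*} [MeasurableSpace α] {μ : Measure α}
    {P : α → ℝ[X]} {N : ℕ} (hdeg : ∀ x, (P x).natDegree ≤ N)
    (hint : ∀ t, Integrable (fun x => (P x).eval t) μ) :
    ∃ Q : ℝ[X], ∀ t, Q.eval t = ∫ x, (P x).eval t ∂μ := by
  let v : Fin (N + 1) → ℝ := fun k => (k : ℕ)
  have hv : InjOn v (Finset.univ : Finset (Fin (N + 1))) := fun i _ j _ hij =>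
    Fin.ext (Nat.cast_injective hij)
  have lagrange : ∀ x t, (P x).eval t =
      ∑ k, (P x).eval (v k) * (Lagrange.basis Finset.univ v k).eval t := fun x t => by
    have hlt : (P x).degree < (Finset.univ : Finset (Fin (N + 1))).card := by
      rw [Finset.card_univ, Fintype.card_fin]
      exact Polynomial.degree_le_natDegree.trans_lt (mod_cast Nat.lt_succ_of_le (hdeg x))
    conv_lhs => rw [Lagrange.eq_interpolate hv hlt]
    simp only [Lagrange.interpolate_apply, Polynomial.eval_finsetSum, Polynomial.eval_mul,
      Polynomial.eval_C]
  refine ⟨∑ k, Polynomial.C (∫ x, (P x).eval (v k) ∂μ) * Lagrange.basis Finset.univ v k,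
    fun t => ?_⟩
  simp_rw [lagrange _ t]
  rw [integral_finsetSum _ fun k _ => (hint (v k)).mul_const _]
  simp only [Polynomial.eval_finsetSum, Polynomial.eval_mul, Polynomial.eval_C,
    integral_mul_const]

section Extension

variable {E : Type*} [NormedAddCommGroup E] {K : ℝ≥0}

theorem bijective_add_of_lipschitzWith [CompleteSpace E] (hK : K < 1) {g : E → E}
    (hg : LipschitzWith K g) : Function.Bijective fun x => x + g x := by
  refine Function.bijective_iff_existsUnique _ |>.2 fun y => ?_
  have hc : ContractingWith K fun x => y - g x := by
    refine ⟨hK, LipschitzWith.of_dist_le_mul fun a b => ?_⟩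
    simpa only [dist_sub_left] using hg.dist_le_mul a b
  have fixed_iff : ∀ x, Function.IsFixedPt (fun x => y - g x) x ↔ x + g x = y := fun x => by
    rw [Function.IsFixedPt, sub_eq_iff_eq_add, eq_comm]
  exact ⟨hc.fixedPoint, (fixed_iff _).1 hc.fixedPoint_isFixedPt,
    fun x hx => hc.fixedPoint_unique ((fixed_iff x).2 hx)⟩

variable [NormedSpace ℝ E] {s : Set E}

theorem exists_mem_segment_mem_frontier {x y : E} (hx : x ∈ s) (hy : y ∉ s) :
    ∃ z ∈ segment ℝ x y, z ∈ frontier s := by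
  by_contra! hdisj
  have hsub : segment ℝ x y ⊆ interior s ∪ interior sᶜ := fun z hz => by
    rw [← compl_frontier_eq_union_interior]
    exact hdisj z hz
  rcases (convex_segment x y).isPreconnected.subset_or_subset isOpen_interior isOpen_interior
    (disjoint_compl_right.mono interior_subset interior_subset) hsub with h | h
  · exact hy (interior_subset (h (right_mem_segment ℝ x y)))
  · exact interior_subset (h (left_mem_segment ℝ x y)) hx

theorem lipschitzWith_indicator {F : Type*} [NormedAddCommGroup F] (hs : IsClosed s)
    {g : E → F} (hg : LipschitzOnWith K g s) (hg₀ : ∀ x ∈ frontier s, g x = 0) :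
    LipschitzWith K (s.indicator g) := by
  have across : ∀ x ∈ s, ∀ y ∉ s, dist (g x) 0 ≤ K * dist x y := fun x hx y hy => by
    obtain ⟨z, hz, hzs⟩ := exists_mem_segment_mem_frontier hx hy
    calc dist (g x) 0 = dist (g x) (g z) := by rw [hg₀ z hzs]
      _ ≤ K * dist x z := hg.dist_le_mul x hx z (hs.frontier_subset hzs)
      _ ≤ K * dist x y := by
        gcongr
        linarith [(mem_segment_iff_wbtw.1 hz).dist_add_dist, dist_nonneg (x := z) (y := y)]
  refine LipschitzWith.of_dist_le_mul fun x y => ?_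
  by_cases hx : x ∈ s <;> by_cases hy : y ∈ s
  · simpa only [indicator_of_mem hx, indicator_of_mem hy] using hg.dist_le_mul x hx y hy
  · simpa only [indicator_of_mem hx, indicator_of_notMem hy] using across x hx y hy
  · simpa only [indicator_of_notMem hx, indicator_of_mem hy, dist_comm] using across y hy x hx
  · simp only [indicator_of_notMem hx, indicator_of_notMem hy, dist_self]
    positivity

theorem bijOn_add_of_lipschitzOnWith [CompleteSpace E] (hs : IsClosed s) (hK : K < 1)
    {g : E → E} (hg : LipschitzOnWith K g s) (hg₀ : ∀ x ∈ frontier s, g x = 0) :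
    BijOn (fun x => x + g x) s s := by
  have hbij := bijective_add_of_lipschitzWith hK (lipschitzWith_indicator hs hg hg₀)
  have hin : EqOn (fun x => x + s.indicator g x) (fun x => x + g x) s := fun x hx => by
    simp only [indicator_of_mem hx]
  have hout : EqOn (fun x => x + s.indicator g x) id sᶜ := fun x hx => by
    simp only [indicator_of_notMem hx, add_zero, id]
  have hcompl : BijOn (fun x => x + s.indicator g x) sᶜ sᶜ := hout.bijOn_iff.2 (bijOn_id _)
  have hmem := hcompl.compl hbij
  rw [compl_compl] at hmem
  exact hin.bijOn_iff.1 hmem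

end Extension

section Volume

variable {E : Type*} [NormedAddCommGroup E] [NormedSpace ℝ E]

theorem eventually_det_one_add_pos : ∀ᶠ A : E →L[ℝ] E in 𝓝 0, 0 < (1 + A).det := by
  have hcont : Continuous fun A : E →L[ℝ] E => (1 + A).det :=
    ContinuousLinearMap.continuous_det.comp (continuous_const.add continuous_id)
  refine hcont.continuousAt.eventually (lt_mem_nhds ?_)
  simp [ContinuousLinearMap.det]

variable [FiniteDimensional ℝ E]

theorem exists_polynomial_eval_eq_det_smul_one_add (A : E →L[ℝ] E) :
    ∃ P : ℝ[X], P.natDegree = finrank ℝ E ∧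
      ∀ t : ℝ, P.eval t = (t • (1 : E →L[ℝ] E) + A).det := by
  refine ⟨(-A : E →ₗ[ℝ] E).charpoly, LinearMap.charpoly_natDegree _, fun t => ?_⟩
  rw [LinearMap.eval_charpoly, sub_neg_eq_add]
  rfl

theorem det_smul_one_add (A : E →L[ℝ] E) {t : ℝ} (ht : t ≠ 0) :
    (t • (1 : E →L[ℝ] E) + A).det = t ^ finrank ℝ E * (1 + t⁻¹ • A).det := by
  rw [show t • (1 : E →L[ℝ] E) + A = t • (1 + t⁻¹ • A) by rw [smul_add, smul_inv_smul₀ ht]]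
  exact LinearMap.det_smul _ _

section Haar

variable [MeasurableSpace E] [BorelSpace E] (μ : Measure E) [μ.IsAddHaarMeasure] {s : Set E}

theorem integral_det_one_add_eq_measureReal (hs : IsClosed s) {K : ℝ≥0} (hK : K < 1) {g : E → E}
    {g' : E → E →L[ℝ] E} (hg' : ∀ x ∈ s, HasFDerivWithinAt g (g' x) s x)
    (hg : LipschitzOnWith K g s) (hg₀ : ∀ x ∈ frontier s, g x = 0)
    (hdet : ∀ x ∈ s, 0 < (1 + g' x).det) :
    ∫ x in s, (1 + g' x).det ∂μ = μ.real s := by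
  have : CompleteSpace E := FiniteDimensional.complete ℝ E
  have hbij := bijOn_add_of_lipschitzOnWith hs hK hg hg₀
  have hchange := integral_image_eq_integral_abs_det_fderiv_smul μ hs.measurableSet
    (fun x hx => (hasFDerivWithinAt_id x s).add (hg' x hx)) hbij.injOn fun _ => (1 : ℝ)
  have himage : (id + g) '' s = s := hbij.image_eq
  rw [himage] at hchange
  simp only [integral_const, smul_eq_mul, mul_one, measureReal_restrict_apply_univ] at hchange
  rw [hchange]
  exact setIntegral_congr_fun hs.measurableSet fun x hx => (abs_of_pos (hdet x hx)).symm

theorem eventually_integral_det_smul_one_add (hs : IsCompact s) (hconv : Convex ℝ s) {g : E → E}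
    {g' : E → E →L[ℝ] E} (hg' : ∀ x ∈ s, HasFDerivWithinAt g (g' x) s x)
    (hg'c : ContinuousOn g' s) (hg₀ : ∀ x ∈ frontier s, g x = 0) :
    ∀ᶠ t : ℝ in atTop, ∫ x in s, (t • (1 : E →L[ℝ] E) + g' x).det ∂μ =
      t ^ finrank ℝ E * μ.real s := by
  obtain ⟨M, hM⟩ := hs.exists_bound_of_continuousOn hg'c
  obtain ⟨δ, hδ, hdet⟩ := Metric.eventually_nhds_iff.1 (eventually_det_one_add_pos (E := E))
  have hsmall : ∀ᶠ t : ℝ in atTop, t⁻¹ * max M 1 < min δ 1 := by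
    have := (tendsto_inv_atTop_zero (𝕜 := ℝ)).mul_const (max M 1)
    rw [zero_mul] at this
    exact this.eventually_lt_const (by positivity)
  filter_upwards [hsmall, eventually_gt_atTop 0] with t ht ht₀
  have hbound : ∀ x ∈ s, ‖t⁻¹ • g' x‖ ≤ t⁻¹ * max M 1 := fun x hx => by
    rw [norm_smul, Real.norm_of_nonneg (inv_pos.2 ht₀).le]
    gcongr
    exact (hM x hx).trans (le_max_left _ _)
  have hderiv : ∀ x ∈ s, HasFDerivWithinAt (fun x => t⁻¹ • g x) (t⁻¹ • g' x) s x :=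
    fun x hx => (hg' x hx).const_smul t⁻¹
  have hlip : LipschitzOnWith (t⁻¹ * max M 1).toNNReal (fun x => t⁻¹ • g x) s :=
    hconv.lipschitzOnWith_of_nnnorm_hasFDerivWithin_le hderiv fun x hx =>
      NNReal.le_toNNReal_of_coe_le (hbound x hx)
  simp_rw [det_smul_one_add _ ht₀.ne', integral_const_mul]
  rw [integral_det_one_add_eq_measureReal μ hs.isClosed
    (Real.toNNReal_lt_one.2 (ht.trans_le (min_le_right _ _))) hderiv hlip
    (fun x hx => by rw [hg₀ x hx, smul_zero]) fun x hx => hdet ?_]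
  rw [dist_zero_right]
  exact (hbound x hx).trans_lt (ht.trans_le (min_le_left _ _))

theorem integral_det_eq_measureReal_of_eq_id_on_frontier (hs : IsCompact s) (hconv : Convex ℝ s)
    {r : E → E} {r' : E → E →L[ℝ] E} (hr' : ∀ x ∈ s, HasFDerivWithinAt r (r' x) s x)
    (hr'c : ContinuousOn r' s) (hid : ∀ x ∈ frontier s, r x = x) :
    ∫ x in s, (r' x).det ∂μ = μ.real s := by
  choose P hdeg hP using fun x => exists_polynomial_eval_eq_det_smul_one_add (r' x - 1)
  have hint : ∀ t, Integrable (fun x => (P x).eval t) (μ.restrict s) := fun t => by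
    simp_rw [hP]
    exact (ContinuousLinearMap.continuous_det.comp_continuousOn
      (continuousOn_const.add (hr'c.sub continuousOn_const))).integrableOn_compact hs
  obtain ⟨Q, hQ⟩ := exists_polynomial_eval_eq_integral (fun x => (hdeg x).le) hint
  simp_rw [hP] at hQ
  obtain ⟨t₀, ht₀⟩ := eventually_atTop.1 <| eventually_integral_det_smul_one_add μ hs hconv
    (g' := fun x => r' x - 1) (fun x hx => (hr' x hx).sub (hasFDerivWithinAt_id x s))
    (hr'c.sub continuousOn_const) fun x hx => sub_eq_zero.2 (hid x hx)
  have hpoly : Q = Polynomial.X ^ finrank ℝ E * Polynomial.C (μ.real s) := by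
    refine Polynomial.eq_of_infinite_eval_eq _ _ ((Ici_infinite t₀).mono fun t ht => ?_)
    rw [mem_ofPred_eq, hQ, ht₀ t ht, Polynomial.eval_mul, Polynomial.eval_pow,
      Polynomial.eval_X, Polynomial.eval_C]
  simpa [hpoly] using (hQ 1).symm

end Haar

theorem exists_det_fderiv_ne_zero_of_eq_id_on_frontier {s U : Set E} (hU : IsOpen U)
    (hsU : s ⊆ U) (hs : IsCompact s) (hconv : Convex ℝ s) (hs₀ : (interior s).Nonempty)
    {r : E → E} (hr : ContDiffOn ℝ 1 r U) (hid : ∀ x ∈ frontier s, r x = x) :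
    ∃ x ∈ s, (fderiv ℝ r x).det ≠ 0 := by
  borelize E
  by_contra! hdet
  have hvol := integral_det_eq_measureReal_of_eq_id_on_frontier Measure.addHaar hs hconv
    (fun x hx => ((hr.differentiableOn one_ne_zero).differentiableAt
      (hU.mem_nhds (hsU hx))).hasFDerivAt.hasFDerivWithinAt)
    ((hr.continuousOn_fderiv_of_isOpen hU le_rfl).mono hsU) hid
  rw [setIntegral_congr_fun hs.measurableSet hdet, integral_zero] at hvol
  have hpos : 0 < Measure.addHaar.real s := ENNReal.toReal_pos
    ((isOpen_interior.measure_pos _ hs₀).trans_le (measure_mono interior_subset)).ne'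
    hs.measure_lt_top.ne
  exact hpos.ne hvol

end Volume

section InnerProduct

open scoped RealInnerProductSpace

variable {E : Type*} [NormedAddCommGroup E] [InnerProductSpace ℝ E] {R : ℝ} {x u : E}

/-- A quarter of the discriminant of the quadratic equation `‖x + s • u‖ ^ 2 = R ^ 2` in `s`. -/
noncomputable def rayDiscr (R : ℝ) (x u : E) : ℝ := ⟪x, u⟫ ^ 2 + ‖u‖ ^ 2 * (R ^ 2 - ‖x‖ ^ 2)

/-- The larger root `s` of `‖x + s • u‖ = R`, that is, the time at which the ray issued from `x`
with velocity `u` leaves the ball of radius `R`. -/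
noncomputable def rayExit (R : ℝ) (x u : E) : ℝ := (-⟪x, u⟫ + √(rayDiscr R x u)) / ‖u‖ ^ 2

theorem rayDiscr_pos (hu : u ≠ 0) (hx : ‖x‖ ≤ R) (hxu : ‖x‖ = R → ⟪x, u⟫ ≠ 0) :
    0 < rayDiscr R x u := by
  rcases hx.lt_or_eq with hlt | heq
  · have : 0 < R ^ 2 - ‖x‖ ^ 2 := sub_pos.2 (by gcongr)
    unfold rayDiscr
    positivity
  · have := hxu heq
    rw [rayDiscr, heq, sub_self, mul_zero, add_zero]
    positivity

theorem ne_zero_of_rayDiscr_pos (hdisc : 0 < rayDiscr R x u) : u ≠ 0 := by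
  rintro rfl
  simp [rayDiscr] at hdisc

theorem norm_add_rayExit_smul (hR : 0 ≤ R) (hdisc : 0 < rayDiscr R x u) :
    ‖x + rayExit R x u • u‖ = R := by
  have hu₀ : ‖u‖ ^ 2 ≠ 0 := pow_ne_zero 2 (norm_ne_zero_iff.2 (ne_zero_of_rayDiscr_pos hdisc))
  have hroot : rayExit R x u * ‖u‖ ^ 2 + ⟪x, u⟫ = √(rayDiscr R x u) := by
    rw [rayExit, div_mul_cancel₀ _ hu₀]
    ring
  have hsq : (rayExit R x u * ‖u‖ ^ 2 + ⟪x, u⟫) ^ 2 =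
      ⟪x, u⟫ ^ 2 + ‖u‖ ^ 2 * (R ^ 2 - ‖x‖ ^ 2) := by
    rw [hroot, Real.sq_sqrt hdisc.le, rayDiscr]
  rw [← sq_eq_sq₀ (norm_nonneg _) hR, norm_add_sq_real, real_inner_smul_right, norm_smul, mul_pow,
    Real.norm_eq_abs, sq_abs]
  refine mul_left_cancel₀ hu₀ ?_
  linear_combination hsq

theorem rayExit_eq_zero (hx : ‖x‖ = R) (hxu : 0 ≤ ⟪x, u⟫) : rayExit R x u = 0 := by
  rw [rayExit, rayDiscr, hx, sub_self, mul_zero, add_zero, Real.sqrt_sq hxu, neg_add_cancel,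
    zero_div]

theorem contDiffOn_rayExit {F : Type*} [NormedAddCommGroup F] [NormedSpace ℝ F]
    {n : WithTop ℕ∞} {v w : F → E} {s : Set F} (hv : ContDiffOn ℝ n v s) (hw : ContDiffOn ℝ n w s)
    (hdisc : ∀ y ∈ s, 0 < rayDiscr R (v y) (w y)) :
    ContDiffOn ℝ n (fun y => rayExit R (v y) (w y)) s := by
  have hinner := hv.inner ℝ hw
  have hdiscr : ContDiffOn ℝ n (fun y => rayDiscr R (v y) (w y)) s :=
    (hinner.pow 2).add ((hw.norm_sq ℝ).mul (contDiffOn_const.sub (hv.norm_sq ℝ)))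
  exact (hinner.neg.add (hdiscr.sqrt fun y hy => (hdisc y hy).ne')).div (hw.norm_sq ℝ) fun y hy =>
    pow_ne_zero 2 (norm_ne_zero_iff.2 (ne_zero_of_rayDiscr_pos (hdisc y hy)))

variable [FiniteDimensional ℝ E]

theorem det_eq_zero_of_norm_eventually_const {r : E → E} {r' : E →L[ℝ] E}
    (hr : HasFDerivAt r r' x) (hx : r x ≠ 0) (hnorm : ∀ᶠ y in 𝓝 x, ‖r y‖ = ‖r x‖) :
    r'.det = 0 := by
  have hconst : HasFDerivAt (fun y => ‖r y‖ ^ 2) (0 : E →L[ℝ] ℝ) x :=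
    (hasFDerivAt_const (‖r x‖ ^ 2) x).congr_of_eventuallyEq <| hnorm.mono fun y hy => by
      simp only [hy]
  have horth : ∀ v, ⟪r x, r' v⟫ = 0 := fun v => by
    have := DFunLike.congr_fun (hr.norm_sq.unique hconst) v
    simpa using this
  by_contra hdet
  obtain ⟨v, hv⟩ := (LinearMap.equivOfDetNeZero (r' : E →ₗ[ℝ] E) hdet).surjective (r x)
  have hself : ⟪r x, r x⟫ = 0 := (congrArg _ hv.symm).trans (horth v)
  exact hx (inner_self_eq_zero.1 hself)

theorem exists_zero_of_contDiff_of_inner_pos {u : E → E} (hu : ContDiff ℝ 1 u) (hR : 0 < R)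
    (hout : ∀ x, ‖x‖ = R → 0 < ⟪x, u x⟫) : ∃ x ∈ closedBall 0 R, u x = 0 := by
  by_contra! hu₀
  let U : Set E := {x | 0 < rayDiscr R x (u x)}
  let r : E → E := fun x => x + rayExit R x (u x) • u x
  have hU : IsOpen U := isOpen_lt continuous_const <| by
    have := hu.continuous
    unfold rayDiscr
    fun_prop
  have hball : closedBall 0 R ⊆ U := fun x hx =>
    rayDiscr_pos (hu₀ x hx) (mem_closedBall_zero_iff.1 hx) fun h => (hout x h).ne'
  have hr : ContDiffOn ℝ 1 r U := contDiffOn_id.add <|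
    (contDiffOn_rayExit contDiffOn_id hu.contDiffOn fun _ hx => hx).smul hu.contDiffOn
  have hid : ∀ x ∈ frontier (closedBall 0 R), r x = x := fun x hx => by
    rw [frontier_closedBall _ hR.ne', mem_sphere_zero_iff_norm] at hx
    simp only [r, rayExit_eq_zero hx (hout x hx).le, zero_smul, add_zero]
  have hsphere : ∀ x ∈ U, ‖r x‖ = R := fun x hx => norm_add_rayExit_smul hR.le hx
  obtain ⟨x, hx, hdet⟩ := exists_det_fderiv_ne_zero_of_eq_id_on_frontier hU hball
    (isCompact_closedBall 0 R) (convex_closedBall 0 R)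
    ⟨0, ball_subset_interior_closedBall (mem_ball_self hR)⟩ hr hid
  have hxU := hU.mem_nhds (hball hx)
  refine hdet (det_eq_zero_of_norm_eventually_const
    ((hr.differentiableOn one_ne_zero).differentiableAt hxU).hasFDerivAt ?_ ?_)
  · rw [← norm_ne_zero_iff, hsphere x (hball hx)]
    exact hR.ne'
  · filter_upwards [hxU] with y hy
    rw [hsphere y hy, hsphere x (hball hx)]

end InnerProduct

section FixedPoint

theorem exists_isFixedPt_of_forall_dist_le {α : Type*} [MetricSpace α] {A : α → α}
    (hA : Continuous A) {K : Set α} (hK : IsCompact K) (hAK : ∀ x, A x ∈ K)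
    (happrox : ∀ ε > 0, ∃ x, dist (A x) x ≤ ε) : ∃ x, Function.IsFixedPt A x := by
  choose x hx using fun n : ℕ => happrox (1 / ((n : ℝ) + 1)) Nat.one_div_pos_of_nat
  obtain ⟨y, -, φ, hφ, hAy⟩ := hK.tendsto_subseq fun n => hAK (x n)
  have hdist : Tendsto (fun n => dist (A (x (φ n))) (x (φ n))) atTop (𝓝 0) :=
    squeeze_zero (fun _ => dist_nonneg) (fun n => hx (φ n))
      (tendsto_one_div_add_atTop_nhds_zero_nat.comp hφ.tendsto_atTop)
  have hxy : Tendsto (fun n => x (φ n)) atTop (𝓝 y) := (tendsto_iff_of_dist hdist).1 hAy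
  exact ⟨y, tendsto_nhds_unique ((hA.tendsto y).comp hxy) hAy⟩

theorem exists_isFixedPt_of_norm_le_of_inner {E : Type*} [NormedAddCommGroup E]
    [InnerProductSpace ℝ E] [FiniteDimensional ℝ E] {Φ : E → E} (hΦ : Continuous Φ) {C : ℝ}
    (hC : ∀ x, ‖Φ x‖ ≤ C) : ∃ x, Function.IsFixedPt Φ x := by
  have : ProperSpace E := FiniteDimensional.proper ℝ E
  refine exists_isFixedPt_of_forall_dist_le hΦ (isCompact_closedBall 0 C)
    (fun x => mem_closedBall_zero_iff.2 (hC x)) fun ε hε => ?_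
  obtain ⟨Ψ, hΨ, hdist, -⟩ := hΦ.exists_contDiff_approx 1 (ε := fun _ => ε)
    continuous_const fun _ => hε
  have hC₀ : 0 ≤ C := (norm_nonneg _).trans (hC 0)
  obtain ⟨x, -, hx⟩ := exists_zero_of_contDiff_of_inner_pos (u := fun x => x - Ψ x)
    (contDiff_id.sub (mod_cast hΨ)) (R := C + ε) (by positivity) fun x hx => by
      have hlt : ‖Ψ x‖ < ‖x‖ := calc
        ‖Ψ x‖ ≤ ‖Φ x‖ + dist (Ψ x) (Φ x) := by
          rw [dist_eq_norm]
          exact norm_le_norm_add_norm_sub' _ _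
        _ < C + ε := add_lt_add_of_le_of_lt (hC x) (hdist x)
        _ = ‖x‖ := hx.symm
      have hx₀ : 0 < ‖x‖ := (norm_nonneg _).trans_lt hlt
      rw [inner_sub_right, real_inner_self_eq_norm_mul_norm, sub_pos]
      exact (real_inner_le_norm x (Ψ x)).trans_lt (mul_lt_mul_of_pos_left hlt hx₀)
  refine ⟨x, ?_⟩
  have := hdist x
  rw [← sub_eq_zero.1 hx, dist_comm] at this
  exact this.le

theorem exists_isFixedPt_of_norm_le {E : Type*} [NormedAddCommGroup E] [NormedSpace ℝ E]
    [FiniteDimensional ℝ E] {Φ : E → E} (hΦ : Continuous Φ) {C : ℝ} (hC : ∀ x, ‖Φ x‖ ≤ C) :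
    ∃ x, Function.IsFixedPt Φ x := by
  let e := toEuclidean (E := E)
  have hbound : ∀ y, ‖e (Φ (e.symm y))‖ ≤ ‖e.toContinuousLinearMap‖ * C := fun y =>
    e.toContinuousLinearMap.le_opNorm_of_le (hC _)
  obtain ⟨y, hy⟩ := exists_isFixedPt_of_norm_le_of_inner
    (e.continuous.comp (hΦ.comp e.symm.continuous)) hbound
  exact ⟨e.symm y, (e.symm_apply_apply _).symm.trans (congrArg e.symm hy)⟩

theorem exists_dist_le_of_mem_compact {X : Type*} [NormedAddCommGroup X] [NormedSpace ℝ X]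
    {A : X → X} (hA : Continuous A) {K : Set X} (hK : IsCompact K) (hAK : ∀ x, A x ∈ K) {ε : ℝ}
    (hε : 0 < ε) : ∃ x, dist (A x) x ≤ ε := by
  obtain ⟨c, hc⟩ := hK.elim_finite_subcover (fun x : X => ball x ε) (fun _ => isOpen_ball)
    fun x _ => mem_iUnion.2 ⟨x, mem_ball_self hε⟩
  obtain ⟨ρ, hρ⟩ := PartitionOfUnity.exists_isSubordinate hK.isClosed
    (fun z : c => ball (z : X) ε) (fun _ => isOpen_ball) (by rwa [iUnion_subtype])
  let J : (c → ℝ) → X := fun a => ∑ z, a z • (z : X)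
  have hJ : Continuous J := by fun_prop
  obtain ⟨a, ha⟩ := exists_isFixedPt_of_norm_le (Φ := fun a z => ρ z (A (J a)))
    (continuous_pi fun z => (ρ z).continuous.comp (hA.comp hJ)) (C := 1) fun a =>
      (pi_norm_le_iff_of_nonneg zero_le_one).2 fun z => by
        rw [Real.norm_of_nonneg (ρ.nonneg z _)]
        exact ρ.le_one z _
  have hJa : ∑ᶠ z, ρ z (A (J a)) • (z : X) = J a := by
    rw [finsum_eq_sum_of_fintype]
    exact congrArg J ha
  have hmem : ∑ᶠ z, ρ z (A (J a)) • (z : X) ∈ closedBall (A (J a)) ε :=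
    ρ.finsum_smul_mem_convex (g := fun z _ => (z : X)) (hAK _) (fun z hz => mem_closedBall'.2
      (mem_ball.1 (hρ z (subset_tsupport _ hz))).le) (convex_closedBall _ ε)
  rw [hJa] at hmem
  exact ⟨J a, mem_closedBall'.1 hmem⟩

theorem exists_isFixedPt_of_mem_compact {X : Type*} [NormedAddCommGroup X] [NormedSpace ℝ X]
    {A : X → X} (hA : Continuous A) {K : Set X} (hK : IsCompact K) (hAK : ∀ x, A x ∈ K) :
    ∃ x, Function.IsFixedPt A x :=
  exists_isFixedPt_of_forall_dist_le hA hK hAK fun _ => exists_dist_le_of_mem_compact hA hK hAK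

end FixedPoint

end Brouwer

section PeriodicResolvent

open Set Filter Topology Metric MeasureTheory
open scoped NNReal

theorem isCompact_closure_of_equicontinuous {X α : Type*} [TopologicalSpace X] [CompactSpace X]
    [MetricSpace α] {S : Set C(X, α)} {Q : Set α} (hQ : IsCompact Q)
    (hmem : ∀ f ∈ S, ∀ x, f x ∈ Q) (hS : Equicontinuous fun (f : S) x => (f : C(X, α)) x) :
    IsCompact (closure S) := by
  let e := (ContinuousMap.isometryEquivBoundedOfCompact X α).symm
  have hcompact : IsCompact (closure (e ⁻¹' S)) :=
    BoundedContinuousFunction.arzela_ascoli Q hQ _ (fun f x hf => hmem (e f) hf x)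
      (hS.comp fun f : e ⁻¹' S => ⟨e f, f.2⟩)
  have himage : e '' closure (e ⁻¹' S) = closure S := by
    rw [← e.coe_toHomeomorph, Homeomorph.image_closure, e.coe_toHomeomorph,
      image_preimage_eq S e.surjective]
  exact himage ▸ hcompact.image e.continuous

theorem lipschitzWith_of_comp_coe_addCircle {T : ℝ} {α : Type*} [PseudoMetricSpace α] {K : ℝ≥0}
    {f : AddCircle T → α} (hf : LipschitzWith K fun t : ℝ => f t) : LipschitzWith K f := by
  refine LipschitzWith.of_dist_le_mul fun x y => ?_
  induction x using QuotientAddGroup.induction_on with | _ s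
  induction y using QuotientAddGroup.induction_on with | _ t
  let k := round (T⁻¹ * (s - t))
  have hs : ((s - k * T : ℝ) : AddCircle T) = s := by
    rw [AddCircle.coe_sub, ← zsmul_eq_mul, AddCircle.coe_zsmul, AddCircle.coe_period, smul_zero,
      sub_zero]
  calc dist (f s) (f t) = dist (f (s - k * T : ℝ)) (f t) := by rw [hs]
    _ ≤ K * dist (s - k * T) t := hf.dist_le_mul _ _
    _ = K * dist (s : AddCircle T) t := by
      rw [dist_eq_norm (s : AddCircle T), ← AddCircle.coe_sub, AddCircle.norm_eq, Real.dist_eq,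
        sub_right_comm]

variable {T : ℝ} {E : Type*} [NormedAddCommGroup E] [NormedSpace ℝ E]

/-- The operator sending `v` to the `T`-periodic solution `y` of `y' = c • y + v`, for `c ≠ 0`.
Variation of constants gives `y (t + T) = e ^ (c T) (y t + ∫ s in 0..T, e ^ (-c s) v (t + s))`,
and periodicity lets one solve for `y t`. -/
noncomputable def periodicResolvent (T c : ℝ) [Fact (0 < T)] :
    C(AddCircle T, E) →L[ℝ] C(AddCircle T, E) where
  toFun v :=
    { toFun := fun x => (exp (-(c * T)) - 1)⁻¹ • ∫ s in 0..T, exp (-(c * s)) • v (x + (s : ℝ))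
      continuous_toFun := by
        have := AddCircle.continuous_mk' T
        fun_prop }
  map_add' v w := by
    have := AddCircle.continuous_mk' T
    ext x
    simp only [ContinuousMap.add_apply, ContinuousMap.coe_mk, smul_add]
    rw [intervalIntegral.integral_add, smul_add] <;>
      exact Continuous.intervalIntegrable (by fun_prop) _ _
  map_smul' a v := by
    ext x
    simp only [ContinuousMap.smul_apply, ContinuousMap.coe_mk, RingHom.id_apply,
      smul_comm _ a, intervalIntegral.integral_smul]
  cont := by
    have := AddCircle.continuous_mk' T
    refine ContinuousMap.continuous_of_continuous_uncurry _ ?_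
    unfold Function.uncurry
    dsimp
    fun_prop

variable [Fact (0 < T)]

theorem periodicResolvent_coe (c : ℝ) (v : C(AddCircle T, E)) (t : ℝ) :
    periodicResolvent T c v t = ((exp (-(c * T)) - 1)⁻¹ * exp (c * t)) •
      ∫ s in t..t + T, exp (-(c * s)) • v s := by
  have hshift : ∀ s : ℝ, exp (-(c * s)) • v (t + (s : ℝ)) =
      exp (c * t) • exp (-(c * (t + s))) • v (t + s : ℝ) := fun s => by
    rw [smul_smul, ← exp_add, AddCircle.coe_add]
    ring_nf
  calc periodicResolvent T c v t
      = (exp (-(c * T)) - 1)⁻¹ • ∫ s in 0..T, exp (-(c * s)) • v (t + (s : ℝ)) := rfl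
    _ = _ := by
      simp_rw [hshift]
      rw [intervalIntegral.integral_comp_add_left (fun s : ℝ => exp (c * t) • exp (-(c * s)) • v s),
        intervalIntegral.integral_smul, smul_smul, add_zero]

theorem hasDerivAt_periodicResolvent [CompleteSpace E] {c : ℝ} (hc : c ≠ 0)
    (v : C(AddCircle T, E)) (t : ℝ) :
    HasDerivAt (fun t : ℝ => periodicResolvent T c v t)
      (c • periodicResolvent T c v t + v t) t := by
  have hT : 0 < T := Fact.out
  have hcont : Continuous fun s : ℝ => exp (-(c * s)) • v s := by
    have := AddCircle.continuous_mk' T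
    fun_prop
  have hexp : exp (-(c * T)) - 1 ≠ 0 := by
    rw [sub_ne_zero, Ne, exp_eq_one_iff]
    simp [hc, hT.ne']
  have hint : HasDerivAt (fun t => ∫ s in t..t + T, exp (-(c * s)) • v s)
      ((exp (-(c * T)) - 1) • exp (-(c * t)) • v t) t := by
    have hprim : ∀ t, HasDerivAt (fun t => ∫ s in 0..t, exp (-(c * s)) • v s)
        (exp (-(c * t)) • v t) t := fun t =>
      intervalIntegral.integral_hasDerivAt_right (hcont.intervalIntegrable 0 t)
        (hcont.stronglyMeasurableAtFilter _ _) hcont.continuousAt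
    refine ((((hprim (t + T)).comp_add_const t T).sub (hprim t)).congr_of_eventuallyEq
      (Eventually.of_forall fun u => ?_)).congr_deriv ?_
    · exact (intervalIntegral.integral_interval_sub_left (hcont.intervalIntegrable _ _)
        (hcont.intervalIntegrable _ _)).symm
    · rw [AddCircle.coe_add, AddCircle.coe_period, add_zero, ← sub_smul, smul_smul, sub_one_mul,
        ← exp_add]
      ring_nf
  have hfactor : HasDerivAt (fun t => (exp (-(c * T)) - 1)⁻¹ * exp (c * t))
      (c * ((exp (-(c * T)) - 1)⁻¹ * exp (c * t))) t := by
    refine (((hasDerivAt_const_mul c).exp).const_mul _).congr_deriv ?_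
    ring
  simp_rw [periodicResolvent_coe]
  refine (hfactor.smul hint).congr_deriv ?_
  rw [smul_smul, smul_smul, smul_smul, add_comm]
  congr 1
  field_simp
  rw [← exp_add]
  simp

theorem lipschitzWith_periodicResolvent [CompleteSpace E] {c : ℝ} (hc : c ≠ 0)
    (v : C(AddCircle T, E)) :
    LipschitzWith ((‖c‖₊ * ‖periodicResolvent (E := E) T c‖₊ + 1) * ‖v‖₊)
      (periodicResolvent T c v) := by
  refine lipschitzWith_of_comp_coe_addCircle <| lipschitzWith_of_nnnorm_deriv_le
    (fun t => (hasDerivAt_periodicResolvent hc v t).differentiableAt) fun t => ?_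
  rw [(hasDerivAt_periodicResolvent hc v t).deriv, add_one_mul, mul_assoc]
  refine (nnnorm_add_le _ _).trans (add_le_add ?_ (v.norm_coe_le_norm _))
  rw [nnnorm_smul]
  gcongr
  exact (ContinuousMap.norm_coe_le_norm _ _).trans (ContinuousLinearMap.le_opNNNorm _ v)

theorem isCompactOperator_periodicResolvent [ProperSpace E] {c : ℝ} (hc : c ≠ 0) :
    IsCompactOperator (periodicResolvent (E := E) T c) := by
  refine (isCompactOperator_iff_isCompact_closure_image_closedBall
    (periodicResolvent (E := E) T c).toLinearMap zero_lt_one).2 ?_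
  refine isCompact_closure_of_equicontinuous
    (isCompact_closedBall 0 ‖periodicResolvent (E := E) T c‖) ?_ ?_
  · rintro _ ⟨v, hv, rfl⟩ x
    rw [mem_closedBall_zero_iff] at hv ⊢
    exact (ContinuousMap.norm_coe_le_norm _ x).trans
      ((periodicResolvent T c).unit_le_opNorm v hv)
  · refine (LipschitzWith.uniformEquicontinuous _ (‖c‖₊ * ‖periodicResolvent (E := E) T c‖₊ + 1)
      ?_).equicontinuous
    rintro ⟨_, v, hv, rfl⟩
    exact (lipschitzWith_periodicResolvent hc v).weaken
      (mul_le_of_le_one_right' (mem_closedBall_zero_iff.1 hv))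

end PeriodicResolvent

section PeriodicSystem

open Set Filter Topology Metric

variable {ι : Type*} {T : ℝ}

theorem continuous_uncurry_periodicLift {X Y : Type*} [TopologicalSpace X] [TopologicalSpace Y]
    {F : ℝ → X → Y} (hF : Continuous F.uncurry) (hper : Function.Periodic F T) :
    Continuous (Function.uncurry hper.lift) :=
  (QuotientAddGroup.isOpenQuotientMap_mk.prodMap IsOpenQuotientMap.id).continuous_comp_iff.1 hF

theorem exists_periodic_solution_of_bounded [Finite ι] (hT : 0 < T) {F : ℝ → (ι → ℝ) → ι → ℝ}
    (hF : Continuous F.uncurry) (hper : Function.Periodic F T) {M : ℝ}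
    (hM : ∀ t x i, |F t x i| ≤ M) {c d : ι → ℝ} (hc : ∀ i, c i ≠ 0) (hd : ∀ i, d i ≠ 0) :
    ∃ φ p : ℝ → ι → ℝ, Function.Periodic φ T ∧ Function.Periodic p T ∧
      (∀ t i, HasDerivAt (fun s => φ s i) (p t i) t) ∧
      ∀ t i, HasDerivAt (fun s => p s i)
        ((c i + d i) * p t i - c i * d i * φ t i + F t (φ t) i) t := by
  have : Fintype ι := Fintype.ofFinite ι
  have : Fact (0 < T) := ⟨hT⟩
  have hlift := continuous_uncurry_periodicLift hF hper
  let N (u : ι → C(AddCircle T, ℝ)) (i : ι) : C(AddCircle T, ℝ) :=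
    ⟨fun x => hper.lift x (fun j => u j x) i, (continuous_apply i).comp
      (hlift.comp (continuous_id.prodMk (by fun_prop)))⟩
  have hN : ∀ i, Continuous fun u => N u i := fun i =>
    ContinuousMap.continuous_of_continuous_uncurry _ <| (continuous_apply i).comp
      (hlift.comp (continuous_snd.prodMk (by fun_prop)))
  have hNM : ∀ u i, N u i ∈ closedBall 0 |M| := fun u i => by
    refine mem_closedBall_zero_iff.2 ((ContinuousMap.norm_le _ (abs_nonneg M)).2 fun x => ?_)
    induction x using QuotientAddGroup.induction_on with | _ t
    exact (hM t _ i).trans (le_abs_self M)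
  let S (i : ι) := (periodicResolvent (E := ℝ) T (c i)).comp (periodicResolvent T (d i))
  have hS : ∀ i, IsCompactOperator (S i) := fun i =>
    (isCompactOperator_periodicResolvent (E := ℝ) (hc i)).comp_clm (periodicResolvent T (d i))
  choose K hK hSK using fun i =>
    (hS i).image_subset_compact_of_bounded (isBounded_closedBall (x := 0) (r := |M|))
  obtain ⟨u, hu⟩ := exists_isFixedPt_of_mem_compact (A := fun u i => S i (N u i))
    (continuous_pi fun i => (S i).continuous.comp (hN i)) (isCompact_univ_pi hK)
    fun u i _ => hSK i ⟨_, hNM u i, rfl⟩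
  let w (i : ι) := periodicResolvent T (d i) (N u i)
  have hφ : ∀ (t : ℝ) i, HasDerivAt (fun s : ℝ => u i s) (c i * u i t + w i t) t := fun t i => by
    have hui : periodicResolvent T (c i) (w i) = u i := congrFun hu i
    simpa only [hui, smul_eq_mul] using hasDerivAt_periodicResolvent (hc i) (w i) t
  have hw : ∀ (t : ℝ) i, HasDerivAt (fun s : ℝ => w i s)
      (d i * w i t + F t (fun j => u j t) i) t := fun t i =>
    hasDerivAt_periodicResolvent (hd i) (N u i) t
  refine ⟨fun t i => u i t, fun t i => c i * u i t + w i t, fun t => ?_, fun t => ?_, hφ,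
    fun t i => (((hφ t i).const_mul (c i)).add (hw t i)).congr_deriv (by ring)⟩ <;>
  simp only [AddCircle.coe_add, AddCircle.coe_period, add_zero]

theorem deriv_deriv_nonpos_of_isLocalMax {y : ℝ → ℝ} {t : ℝ} (hy : ContinuousAt y t)
    (hmax : IsLocalMax y t) : deriv (deriv y) t ≤ 0 := by
  by_contra! hpos
  have hmin := isLocalMin_of_deriv_deriv_pos hpos hmax.deriv_eq_zero hy
  have hconst : y =ᶠ[𝓝 t] fun _ => y t := by
    filter_upwards [hmin, hmax] with s hs₁ hs₂ using le_antisymm hs₂ hs₁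
  have hzero : deriv (deriv y) t = 0 := by
    rw [hconst.deriv.deriv_eq]
    simp only [deriv_const', deriv_const]
  exact hpos.ne' hzero

theorem lt_of_periodic_of_deriv_pos {y p d : ℝ → ℝ} {b : ℝ} (hT : 0 < T)
    (hper : Function.Periodic y T) (hy : ∀ t, HasDerivAt y (p t) t)
    (hp : ∀ t, HasDerivAt p (d t) t) (hd : ∀ t, p t = 0 → b ≤ y t → 0 < d t) (t : ℝ) :
    y t < b := by
  have hcont : Continuous y := continuous_iff_continuousAt.2 fun t => (hy t).continuousAt
  obtain ⟨_, ⟨t₀, rfl⟩, ht₀⟩ :=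
    (hper.compact_of_continuous hT.ne' hcont).exists_isGreatest (range_nonempty y)
  have hmax : IsLocalMax y t₀ := Eventually.of_forall fun s => ht₀ (mem_range_self s)
  have hconcave := deriv_deriv_nonpos_of_isLocalMax hcont.continuousAt hmax
  rw [funext fun s => (hy s).deriv, (hp t₀).deriv] at hconcave
  refine (ht₀ (mem_range_self t)).trans_lt (lt_of_not_ge fun hb => ?_)
  exact hconcave.not_gt (hd t₀ (hmax.hasDerivAt_eq_zero (hy t₀)) hb)

theorem gt_of_periodic_of_deriv_neg {y p d : ℝ → ℝ} {a : ℝ} (hT : 0 < T)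
    (hper : Function.Periodic y T) (hy : ∀ t, HasDerivAt y (p t) t)
    (hp : ∀ t, HasDerivAt p (d t) t) (hd : ∀ t, p t = 0 → y t ≤ a → d t < 0) (t : ℝ) :
    a < y t :=
  neg_lt_neg_iff.1 <| lt_of_periodic_of_deriv_pos (y := -y) (p := -p) (d := -d) hT
    (fun s => congrArg Neg.neg (hper s)) (fun s => (hy s).neg) (fun s => (hp s).neg)
    (fun s hps hs => neg_pos.2 (hd s (neg_eq_zero.1 hps) (neg_le_neg_iff.1 hs))) t

/-- The nearest-point retraction of `ι → ℝ` onto the box `Set.Icc α β`, for `α ≤ β`. -/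
noncomputable def boxClamp {α β : ι → ℝ} (hαβ : α ≤ β) (x : ι → ℝ) (i : ι) : ℝ :=
  projIcc (α i) (β i) (hαβ i) (x i)

section BoxClamp

variable {α β x : ι → ℝ} {i : ι}

theorem continuous_boxClamp (hαβ : α ≤ β) : Continuous (boxClamp hαβ) :=
  continuous_pi fun i =>
    continuous_subtype_val.comp (continuous_projIcc.comp (continuous_apply i))

theorem boxClamp_mem_Icc (hαβ : α ≤ β) (x : ι → ℝ) : boxClamp hαβ x ∈ Icc α β :=
  ⟨fun i => (projIcc _ _ (hαβ i) (x i)).2.1, fun i => (projIcc _ _ (hαβ i) (x i)).2.2⟩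

theorem boxClamp_of_right_le (hαβ : α ≤ β) (hx : β i ≤ x i) : boxClamp hαβ x i = β i :=
  congrArg Subtype.val (projIcc_of_right_le (hαβ i) hx)

theorem boxClamp_of_le_left (hαβ : α ≤ β) (hx : x i ≤ α i) : boxClamp hαβ x i = α i :=
  congrArg Subtype.val (projIcc_of_le_left (hαβ i) hx)

theorem boxClamp_of_mem (hαβ : α ≤ β) (hx : x ∈ Icc α β) : boxClamp hαβ x = x :=
  funext fun i => congrArg Subtype.val (projIcc_of_mem (hαβ i) ⟨hx.1 i, hx.2 i⟩)

end BoxClamp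

theorem exists_forall_abs_le_of_periodic {X : Type*} [TopologicalSpace X] [Finite ι]
    {s : Set X} (hs : IsCompact s) {G : ℝ → X → ι → ℝ}
    (hG : ContinuousOn G.uncurry (univ ×ˢ s)) (hT : 0 < T) (hper : Function.Periodic G T) :
    ∃ M, ∀ t, ∀ x ∈ s, ∀ i, |G t x i| ≤ M := by
  have : Fintype ι := Fintype.ofFinite ι
  obtain ⟨M, hM⟩ := (isCompact_Icc.prod hs).exists_bound_of_continuousOn
    (hG.mono (prod_mono_left (subset_univ (Icc 0 T))))
  refine ⟨M, fun t x hx i => ?_⟩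
  obtain ⟨t', ht', hGt⟩ := hper.exists_mem_Ico₀ hT t
  rw [hGt]
  exact (norm_le_pi_norm (G t' x) i).trans (hM (t', x) ⟨Ico_subset_Icc_self ht', hx⟩)

theorem exists_periodic_solution_boxClamp [Finite ι] (hT : 0 < T) {α β : ι → ℝ} (hαβ : α ≤ β)
    {G : ℝ → (ι → ℝ) → ι → ℝ} (hG : ContinuousOn G.uncurry (univ ×ˢ Icc α β))
    (hper : Function.Periodic G T) (γ : ι → ℝ) :
    ∃ κ : ι → ℝ, (∀ i, 0 < κ i) ∧ ∃ φ p : ℝ → ι → ℝ,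
      Function.Periodic φ T ∧ Function.Periodic p T ∧
      (∀ t i, HasDerivAt (fun s => φ s i) (p t i) t) ∧
      ∀ t i, HasDerivAt (fun s => p s i) (G t (boxClamp hαβ (φ t)) i - γ i * p t i +
        κ i * (φ t i - boxClamp hαβ (φ t) i)) t := by
  -- `c i` and `d i` are nonzero roots of opposite sign of `X ^ 2 + γ i * X - κ i`.
  let d (i : ι) : ℝ := 1 + |γ i|
  let c (i : ι) : ℝ := -(γ i + d i)
  have hd : ∀ i, 0 < d i := fun i => by positivity
  have hc : ∀ i, c i < 0 := fun i => neg_lt_zero.2 (by linarith [neg_abs_le (γ i)])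
  let F (t : ℝ) (x : ι → ℝ) (i : ι) : ℝ := G t x i + c i * d i * x i
  have hF : ContinuousOn F.uncurry (univ ×ˢ Icc α β) := hG.add (by fun_prop)
  have hFper : Function.Periodic F T := fun t => by simp only [F, hper t]
  obtain ⟨M, hM⟩ := exists_forall_abs_le_of_periodic isCompact_Icc hF hT hFper
  have hmem := boxClamp_mem_Icc hαβ
  obtain ⟨φ, p, hφper, hpper, hφ, hp⟩ := exists_periodic_solution_of_bounded hT
    (F := fun t x => F t (boxClamp hαβ x))
    (hF.comp_continuous (continuous_fst.prodMk ((continuous_boxClamp hαβ).comp continuous_snd))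
      fun z => ⟨mem_univ _, hmem z.2⟩)
    (fun t => by simp only [hFper t]) (fun t x => hM t _ (hmem x))
    (fun i => (hc i).ne) (fun i => (hd i).ne')
  refine ⟨fun i => -(c i * d i), fun i => neg_pos.2 (mul_neg_of_neg_of_pos (hc i) (hd i)),
    φ, p, hφper, hpper, hφ, fun t i => (hp t i).congr_deriv ?_⟩
  simp only [F, c]
  ring

theorem exists_periodic_solution_mem_Ioo [Finite ι] (hT : 0 < T) {α β : ι → ℝ} (hαβ : α ≤ β)
    {G : ℝ → (ι → ℝ) → ι → ℝ} (hG : ContinuousOn G.uncurry (univ ×ˢ Icc α β))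
    (hper : Function.Periodic G T) (hGβ : ∀ t, ∀ x ∈ Icc α β, ∀ i, x i = β i → 0 < G t x i)
    (hGα : ∀ t, ∀ x ∈ Icc α β, ∀ i, x i = α i → G t x i < 0) (γ : ι → ℝ) :
    ∃ φ p : ℝ → ι → ℝ, Function.Periodic φ T ∧ Function.Periodic p T ∧
      (∀ t i, HasDerivAt (fun s => φ s i) (p t i) t) ∧
      (∀ t i, HasDerivAt (fun s => p s i) (G t (φ t) i - γ i * p t i) t) ∧
      ∀ t i, φ t i ∈ Ioo (α i) (β i) := by
  obtain ⟨κ, hκ, φ, p, hφper, hpper, hφ, hp⟩ :=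
    exists_periodic_solution_boxClamp hT hαβ hG hper γ
  have hmem := boxClamp_mem_Icc hαβ
  have hβ : ∀ t i, φ t i < β i := fun t i => by
    refine lt_of_periodic_of_deriv_pos hT (fun s => congrFun (hφper s) i) (fun s => hφ s i)
      (fun s => hp s i) (fun s hps hs => ?_) t
    have hclamp := boxClamp_of_right_le hαβ hs
    have hpull := mul_nonneg (hκ i).le (sub_nonneg.2 hs)
    rw [hps, hclamp, mul_zero, sub_zero]
    exact add_pos_of_pos_of_nonneg (hGβ s _ (hmem _) i hclamp) hpull
  have hα : ∀ t i, α i < φ t i := fun t i => by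
    refine gt_of_periodic_of_deriv_neg hT (fun s => congrFun (hφper s) i) (fun s => hφ s i)
      (fun s => hp s i) (fun s hps hs => ?_) t
    have hclamp := boxClamp_of_le_left hαβ hs
    have hpull := mul_nonpos_of_nonneg_of_nonpos (hκ i).le (sub_nonpos.2 hs)
    rw [hps, hclamp, mul_zero, sub_zero]
    exact add_neg_of_neg_of_nonpos (hGα s _ (hmem _) i hclamp) hpull
  refine ⟨φ, p, hφper, hpper, hφ, fun t i => (hp t i).congr_deriv ?_,
    fun t i => ⟨hα t i, hβ t i⟩⟩
  rw [boxClamp_of_mem hαβ ⟨fun j => (hα t j).le, fun j => (hβ t j).le⟩, sub_self, mul_zero,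
    add_zero]

end PeriodicSystem

section Interaction

variable {σi σj li lj t y : ℝ} {h : ℝ → ℝ} {f : ℝ → ℝ → ℝ}

theorem norm2_ne_zero {u : ℝ × ℝ} (hu : u ≠ 0) : norm2 u ≠ 0 := by
  refine (Real.sqrt_pos.2 ?_).ne'
  rcases not_and_or.1 (mt Prod.ext_iff.2 hu) with h₁ | h₂
  · exact add_pos_of_pos_of_nonneg (mul_self_pos.2 h₁) (mul_self_nonneg _)
  · exact add_pos_of_nonneg_of_pos (mul_self_nonneg _) (mul_self_pos.2 h₂)

theorem pendBob_ne_pendBob (hi : 0 < li) (hj : 0 < lj) (hσ : li + lj < |σi - σj|)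
    (h : ℝ → ℝ) (t x y : ℝ) : pendBob σi h li t x ≠ pendBob σj h lj t y := fun heq => by
  have hfst : σi - σj = lj * sin y - li * sin x := by
    have : σi + h t + li * sin x = σj + h t + lj * sin y := congrArg Prod.fst heq
    linarith
  have habs : ∀ {l : ℝ} (θ : ℝ), 0 < l → |l * sin θ| ≤ l := fun θ hl => by
    rw [abs_mul, abs_of_pos hl]
    exact mul_le_of_le_one_right hl.le (abs_sin_le_one θ)
  rw [hfst] at hσ
  linarith [abs_sub (lj * sin y) (li * sin x), habs x hi, habs y hj]

theorem pendBob_sub_pendBob (σi σj : ℝ) (h : ℝ → ℝ) (li lj t x y : ℝ) :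
    pendBob σi h li t x - pendBob σj h lj t y =
      (σi - σj + (li * sin x - lj * sin y), li * cos x - lj * cos y) := by
  simp only [pendBob, Prod.mk_sub_mk]
  ring_nf

theorem interDot_eq_interDot_zero (σi σj : ℝ) (h : ℝ → ℝ) (li lj : ℝ) (f : ℝ → ℝ → ℝ)
    (t x y : ℝ) : interDot σi σj h li lj f t x y = interDot σi σj h li lj f 0 x y := by
  simp only [interDot, pendBob_sub_pendBob]

theorem continuous_interDot (hne : ∀ x y, pendBob σi h li t x ≠ pendBob σj h lj t y)
    (hf : Continuous f.uncurry) :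
    Continuous fun u : ℝ × ℝ => interDot σi σj h li lj f t u.1 u.2 := by
  have hnorm : ∀ u : ℝ × ℝ, norm2 (pendBob σi h li t u.1 - pendBob σj h lj t u.2) ≠ 0 :=
    fun u => norm2_ne_zero (sub_ne_zero.2 (hne u.1 u.2))
  refine (hf.div₀ ?_ hnorm).mul ?_ <;>
  · simp only [pendBob_sub_pendBob, norm2, dot2, ephi]
    fun_prop

theorem dot2_pendBob_sub_ephi_pi_div_two (σi σj : ℝ) (h : ℝ → ℝ) (li lj t y : ℝ) :
    dot2 (pendBob σi h li t (π / 2) - pendBob σj h lj t y) (ephi (π / 2)) = lj * cos y := by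
  simp [pendBob_sub_pendBob, dot2, ephi]

theorem dot2_pendBob_sub_ephi_neg_pi_div_two (σi σj : ℝ) (h : ℝ → ℝ) (li lj t y : ℝ) :
    dot2 (pendBob σi h li t (-(π / 2)) - pendBob σj h lj t y) (ephi (-(π / 2))) =
      -(lj * cos y) := by
  simp [pendBob_sub_pendBob, dot2, ephi]

theorem interDot_pi_div_two_nonneg (hj : 0 ≤ lj) (hf : 0 ≤ f (π / 2) y) (hy : 0 ≤ cos y) :
    0 ≤ interDot σi σj h li lj f t (π / 2) y := by
  rw [interDot, dot2_pendBob_sub_ephi_pi_div_two]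
  exact mul_nonneg (div_nonneg hf (Real.sqrt_nonneg _)) (mul_nonneg hj hy)

theorem interDot_neg_pi_div_two_nonpos (hj : 0 ≤ lj) (hf : 0 ≤ f (-(π / 2)) y)
    (hy : 0 ≤ cos y) : interDot σi σj h li lj f t (-(π / 2)) y ≤ 0 := by
  rw [interDot, dot2_pendBob_sub_ephi_neg_pi_div_two]
  exact mul_nonpos_of_nonneg_of_nonpos (div_nonneg hf (Real.sqrt_nonneg _))
    (neg_nonpos.2 (mul_nonneg hj hy))

end Interaction

section Pendulums

theorem periodic_deriv {𝕜 F : Type*} [NontriviallyNormedField 𝕜] [NormedAddCommGroup F]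
    [NormedSpace 𝕜 F] {h : 𝕜 → F} {T : 𝕜} (hper : Function.Periodic h T) :
    Function.Periodic (deriv h) T := fun t => by
  rw [← deriv_comp_add_const, funext hper]

variable {n : ℕ} {g T : ℝ} {m l γ σ : Fin n → ℝ} {h : ℝ → ℝ}
  {f : Fin n → Fin n → ℝ → ℝ → ℝ}

theorem pendRHS_eq_sub_mul (i : Fin n) (t : ℝ) (φ : Fin n → ℝ) (p : ℝ) :
    pendRHS n g m l γ σ h f i t φ p = pendRHS n g m l γ σ h f i t φ 0 - γ i * p := by
  simp only [pendRHS]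
  ring

theorem periodic_pendRHS (hper : Function.Periodic h T) (p : ℝ) :
    Function.Periodic (fun t φ i => pendRHS n g m l γ σ h f i t φ p) T := fun t => by
  simp only [pendRHS, periodic_deriv (periodic_deriv hper) t,
    interDot_eq_interDot_zero _ _ _ _ _ _ (t + T), interDot_eq_interDot_zero _ _ _ _ _ _ t]

theorem continuous_pendRHS (hh : ContDiff ℝ 2 h)
    (hne : ∀ i j, i ≠ j → ∀ t x y, pendBob (σ i) h (l i) t x ≠ pendBob (σ j) h (l j) t y)
    (hf : ∀ i j, i ≠ j → Continuous (f i j).uncurry) (i : Fin n) (p : ℝ) :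
    Continuous fun z : ℝ × (Fin n → ℝ) => pendRHS n g m l γ σ h f i z.1 z.2 p := by
  have hinter : Continuous fun z : ℝ × (Fin n → ℝ) =>
      ∑ j ∈ Finset.univ.erase i,
        interDot (σ i) (σ j) h (l i) (l j) (f i j) z.1 (z.2 i) (z.2 j) := by
    simp only [interDot_eq_interDot_zero _ _ _ _ _ _ (Prod.fst _)]
    refine continuous_finsetSum _ fun j hj => ?_
    have hij := (Finset.ne_of_mem_erase hj).symm
    exact (continuous_interDot (hne i j hij 0) (hf i j hij)).comp
      (show Continuous fun z : ℝ × (Fin n → ℝ) => (z.2 i, z.2 j) by fun_prop)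
  have hh' : ContDiff ℝ 1 (deriv h) := hh.deriv' (n := 1)
  have : Continuous (deriv (deriv h)) := hh'.continuous_deriv le_rfl
  unfold pendRHS
  fun_prop

theorem pendRHS_pos {i : Fin n} (hg : 0 < g) (hm : 0 < m i) (hl : ∀ j, 0 < l j)
    (hf : ∀ j, i ≠ j → ∀ y, 0 ≤ f i j (π / 2) y) {φ : Fin n → ℝ} (hφi : φ i = π / 2)
    (hφ : ∀ j, 0 ≤ cos (φ j)) (t : ℝ) : 0 < pendRHS n g m l γ σ h f i t φ 0 := by
  have hgrav : 0 < g / l i := div_pos hg (hl i)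
  have hcoef : 0 ≤ 1 / (m i * l i) := (one_div_pos.2 (mul_pos hm (hl i))).le
  have hrep : 0 ≤ ∑ j ∈ Finset.univ.erase i,
      interDot (σ i) (σ j) h (l i) (l j) (f i j) t (π / 2) (φ j) :=
    Finset.sum_nonneg fun j hj => interDot_pi_div_two_nonneg (hl j).le
      (hf j (Finset.ne_of_mem_erase hj).symm _) (hφ j)
  rw [pendRHS, hφi, cos_pi_div_two, sin_pi_div_two]
  linarith [mul_nonneg hcoef hrep]

theorem pendRHS_neg {i : Fin n} (hg : 0 < g) (hm : 0 < m i) (hl : ∀ j, 0 < l j)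
    (hf : ∀ j, i ≠ j → ∀ y, 0 ≤ f i j (-(π / 2)) y) {φ : Fin n → ℝ} (hφi : φ i = -(π / 2))
    (hφ : ∀ j, 0 ≤ cos (φ j)) (t : ℝ) : pendRHS n g m l γ σ h f i t φ 0 < 0 := by
  have hgrav : 0 < g / l i := div_pos hg (hl i)
  have hcoef : 0 ≤ 1 / (m i * l i) := (one_div_pos.2 (mul_pos hm (hl i))).le
  have hrep : ∑ j ∈ Finset.univ.erase i,
      interDot (σ i) (σ j) h (l i) (l j) (f i j) t (-(π / 2)) (φ j) ≤ 0 :=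
    Finset.sum_nonpos fun j hj => interDot_neg_pi_div_two_nonpos (hl j).le
      (hf j (Finset.ne_of_mem_erase hj).symm _) (hφ j)
  rw [pendRHS, hφi, cos_neg, sin_neg, cos_pi_div_two, sin_pi_div_two]
  linarith [mul_nonpos_of_nonneg_of_nonpos hcoef hrep]

end Pendulums

theorem coupled_pendulums_periodic_solution_general
    (n : ℕ) (g T : ℝ) (hg : 0 < g) (hT : 0 < T)
    (m l γ σ : Fin n → ℝ)
    (hm : ∀ i, 0 < m i) (hl : ∀ i, 0 < l i)
    (h : ℝ → ℝ) (hh : ContDiff ℝ 2 h) (hhper : Function.Periodic h T)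
    (hne : ∀ i j, i ≠ j → ∀ t x y, pendBob (σ i) h (l i) t x ≠ pendBob (σ j) h (l j) t y)
    (f : Fin n → Fin n → ℝ → ℝ → ℝ)
    (hf : ∀ i j, i ≠ j → Continuous (f i j).uncurry)
    (hfright : ∀ i j, i ≠ j → ∀ y, 0 ≤ f i j (π / 2) y)
    (hfleft : ∀ i j, i ≠ j → ∀ y, 0 ≤ f i j (-(π / 2)) y) :
    ∃ φ p : ℝ → Fin n → ℝ,
      (∀ t i, HasDerivAt (fun s => φ s i) (p t i) t) ∧
      (∀ t i, HasDerivAt (fun s => p s i)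
        (pendRHS n g m l γ σ h f i t (φ t) (p t i)) t) ∧
      (∀ t i, φ (t + T) i = φ t i) ∧
      (∀ t i, p (t + T) i = p t i) ∧
      (∀ t i, φ t i ∈ Set.Ioo (-(π / 2)) (π / 2)) := by
  have hcont : Continuous (Function.uncurry fun t φ i => pendRHS n g m l γ σ h f i t φ 0) :=
    continuous_pi fun i => continuous_pendRHS hh hne hf i 0
  have hcos : ∀ φ ∈ Set.Icc (fun _ => -(π / 2)) (fun _ : Fin n => π / 2), ∀ j, 0 ≤ cos (φ j) :=
    fun φ hφ j => cos_nonneg_of_mem_Icc ⟨hφ.1 j, hφ.2 j⟩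
  obtain ⟨φ, p, hφper, hpper, hφ, hp, hmem⟩ := exists_periodic_solution_mem_Ioo hT
    (fun _ => neg_le_self pi_div_two_pos.le) hcont.continuousOn (periodic_pendRHS hhper 0)
    (fun t φ hφ i hi => pendRHS_pos hg (hm i) hl (hfright i) hi (hcos φ hφ) t)
    (fun t φ hφ i hi => pendRHS_neg hg (hm i) hl (hfleft i) hi (hcos φ hφ) t) γ
  refine ⟨φ, p, hφ, fun t i => ?_, fun t => congrFun (hφper t), fun t => congrFun (hpper t), hmem⟩
  rw [pendRHS_eq_sub_mul]
  exact hp t i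

theorem coupled_pendulums_periodic_solution
    (n : ℕ) (hn : 1 ≤ n) (g T : ℝ) (hg : 0 < g) (hT : 0 < T)
    (m l γ σ : Fin n → ℝ)
    (hm : ∀ i, 0 < m i) (hl : ∀ i, 0 < l i) (hγ : ∀ i, 0 < γ i)
    -- the pendulums are pairwise disjoint
    (hσ : ∀ i j, i ≠ j → l i + l j < |σ i - σ j|)
    (h : ℝ → ℝ) (hh : ContDiff ℝ (⊤ : ℕ∞) h) (hhper : ∀ t, h (t + T) = h t)
    (f : Fin n → Fin n → ℝ → ℝ → ℝ)
    (hfsmooth : ∀ i j, ContDiff ℝ (⊤ : ℕ∞) (fun u : ℝ × ℝ => f i j u.1 u.2))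
    (hfpos : ∀ i j x y, 0 ≤ f i j x y) :
    ∃ φ p : ℝ → Fin n → ℝ,
      (∀ t i, HasDerivAt (fun s => φ s i) (p t i) t) ∧
      (∀ t i, HasDerivAt (fun s => p s i)
        (pendRHS n g m l γ σ h f i t (φ t) (p t i)) t) ∧
      (∀ t i, φ (t + T) i = φ t i) ∧
      (∀ t i, p (t + T) i = p t i) ∧
      (∀ t i, φ t i ∈ Set.Ioo (-(π / 2)) (π / 2)) :=
  coupled_pendulums_periodic_solution_general n g T hg hT m l γ σ hm hl h
    (contDiff_infty.1 hh 2) hhper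
    (fun i j hij => pendBob_ne_pendBob (hl i) (hl j) (hσ i j hij) h) f
    (fun i j _ => (hfsmooth i j).continuous) (fun i j _ => hfpos i j _) fun i j _ => hfpos i j _
end

section
/- Suppose that (−1)^{k+1} · F(t, k(δ + a)) < 0 for all t ∈ ℝ and all k = 1, …, 2n. Then the oscillator chain ẍᵢ = −γ ẋᵢ − V′(xᵢ − x_{i−1}) + V′(x_{i+1} − xᵢ) + F(t, xᵢ), i = 1,…,n, has a T-periodic solution: there exist C² functions xᵢ : ℝ → ℝ solving the system with xᵢ(t + T) = xᵢ(t), ẋᵢ(t + T) = ẋᵢ(t), and (2i − 1)(δ + a) < xᵢ(t) < 2i(δ + a) for all t ∈ ℝ and all i = 1,…,n. -/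
/-- The Morse potential `V(x) = ½(1 − e^{−(x−δ)})²`. -/
noncomputable def morseV (δ : ℝ) (x : ℝ) : ℝ := (1 - Real.exp (-(x - δ))) ^ 2 / 2

/-!
Write `γ = ν - μ` with `μ, ν > 0`. Then `u'' + γ u' - μ ν u` factors into the first-order operators
`d/dt + ν` and `d/dt - μ`, whose bounded inverses are averages of the right-hand side against
exponential densities, one over the past and one over the future; in particular they preserve
order. A system `u'' = -γ u' + G(t, u)` thus becomes `u = A (u - G(·, u) / (μ ν))` with an
order-preserving averaging operator `A`.

On the box of configurations with `(2i - 1) L ≤ uᵢ ≤ 2i L`, where `L = δ + a ≥ δ + log 2`, all bond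
lengths lie in `[L, 3L]`. The potential is concave there, so raising the other coordinates never
raises `Gᵢ`. For `μ ν` large, `u - G(t, u) / (μ ν)` is therefore monotone on the box, and the sign
conditions on `F` make the two extreme corners of the box a sub- and a supersolution. The
Knaster–Tarski argument in the set of periodic trajectories in the box with a fixed Lipschitz
constant yields a fixed point, and the strictness of the sign conditions keeps it away from the
faces.
-/

open MeasureTheory ProbabilityTheory Set

section ExpMean

instance isProbabilityMeasure_expMeasure_one : IsProbabilityMeasure (expMeasure 1) :=
  isProbabilityMeasure_expMeasure one_pos

lemma integral_expMeasure_one (f : ℝ → ℝ) :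
    ∫ s, f s ∂expMeasure 1 = ∫ s in Ioi 0, Real.exp (-s) * f s := by
  have density (s : ℝ) : (exponentialPDF 1 s).toReal • f s =
      (Ici 0).indicator (fun r => Real.exp (-r) * f r) s := by
    by_cases hs : 0 ≤ s <;>
      simp [exponentialPDF_eq, hs, ENNReal.toReal_ofReal (Real.exp_pos _).le]
  calc ∫ s, f s ∂expMeasure 1
      = ∫ s, (exponentialPDF 1 s).toReal • f s :=
        integral_withDensity_eq_integral_toReal_smul
          (measurable_exponentialPDFReal 1).ennreal_ofReal
          (Filter.Eventually.of_forall fun _ => ENNReal.ofReal_lt_top) f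
    _ = ∫ s in Ioi 0, Real.exp (-s) * f s := by
        simp_rw [density, integral_indicator measurableSet_Ici, integral_Ici_eq_integral_Ioi]

lemma hasDerivAt_integral_Ioi {g : ℝ → ℝ} (hg : Continuous g)
    (hint : ∀ a, IntegrableOn g (Ioi a)) (t : ℝ) :
    HasDerivAt (fun a => ∫ r in Ioi a, g r) (-g t) t := by
  have tail_eq : (fun a => ∫ r in Ioi a, g r) =
      fun a => (∫ r in Ioi t, g r) - ∫ r in t..a, g r := by
    funext a
    rw [← intervalIntegral.integral_interval_add_Ioi (hint t) (hint a), add_sub_cancel_left]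
  rw [tail_eq]
  exact (hg.integral_hasStrictDerivAt t t).hasDerivAt.const_sub _

/-- The exponentially weighted mean `∫₀^∞ e^{-s} f (t + s / κ) ds`, over the future of `t` for
`κ > 0` and over its past for `κ < 0`. For bounded continuous `f` it is the bounded solution of
`y' = κ (y - f)`. -/
noncomputable def expMean (κ : ℝ) (f : ℝ → ℝ) (t : ℝ) : ℝ :=
  ∫ s, f (t + s / κ) ∂expMeasure 1

variable {κ a b : ℝ} {f g : ℝ → ℝ}

lemma expMean_const (κ c t : ℝ) : expMean κ (fun _ => c) t = c := by
  simp [expMean]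

lemma periodic_expMean {T : ℝ} (hf : f.Periodic T) : (expMean κ f).Periodic T := fun t => by
  simp only [expMean, add_right_comm t T, hf _]

lemma integrable_expMeasure_comp (hf : Continuous f) (hfab : ∀ t, f t ∈ Icc a b) (κ t : ℝ) :
    Integrable (fun s => f (t + s / κ)) (expMeasure 1) :=
  .of_mem_Icc a b (by fun_prop) (.of_forall fun _ => hfab _)

lemma expMean_mono (hf : Continuous f) (hg : Continuous g) (hfab : ∀ t, f t ∈ Icc a b)
    (hgab : ∀ t, g t ∈ Icc a b) (hfg : ∀ t, f t ≤ g t) (t : ℝ) :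
    expMean κ f t ≤ expMean κ g t :=
  integral_mono (integrable_expMeasure_comp hf hfab κ t) (integrable_expMeasure_comp hg hgab κ t)
    fun _ => hfg _

lemma expMean_lt_expMean (hf : Continuous f) (hg : Continuous g) (hfab : ∀ t, f t ∈ Icc a b)
    (hgab : ∀ t, g t ∈ Icc a b) (hfg : ∀ t, f t < g t) (t : ℝ) :
    expMean κ f t < expMean κ g t := by
  have hf_int := integrable_expMeasure_comp hf hfab κ t
  have hg_int := integrable_expMeasure_comp hg hgab κ t
  have diff_pos (s : ℝ) : 0 < g (t + s / κ) - f (t + s / κ) := sub_pos.2 (hfg _)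
  have support_eq : Function.support (fun s => g (t + s / κ) - f (t + s / κ)) = univ :=
    eq_univ_of_forall fun s => (diff_pos s).ne'
  rw [expMean, expMean, ← sub_pos, ← integral_sub hg_int hf_int,
    integral_pos_iff_support_of_nonneg (fun s => (diff_pos s).le) (hg_int.sub hf_int), support_eq]
  simp

lemma expMean_mem_Icc (hf : Continuous f) (hfab : ∀ t, f t ∈ Icc a b) (t : ℝ) :
    expMean κ f t ∈ Icc a b := by
  have hab : a ≤ b := (hfab t).1.trans (hfab t).2
  constructor
  · simpa only [expMean_const] using
      expMean_mono (κ := κ) continuous_const hf (fun _ => left_mem_Icc.2 hab) hfab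
        (fun s => (hfab s).1) t
  · simpa only [expMean_const] using
      expMean_mono (κ := κ) hf continuous_const hfab (fun _ => right_mem_Icc.2 hab)
        (fun s => (hfab s).2) t

lemma expMean_eq_exp_mul_integral_Ioi (hκ : κ ≠ 0) (f : ℝ → ℝ) (t : ℝ) :
    expMean κ f t = Real.exp (κ * t) * ∫ r in Ioi (κ * t), Real.exp (-r) * f (r / κ) := by
  have shift := (measurePreserving_add_right volume (κ * t)).setIntegral_preimage_emb
    (measurableEmbedding_addRight (κ * t)) (fun r => Real.exp (-r) * f (r / κ)) (Ioi (κ * t))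
  rw [preimage_add_const_Ioi, sub_self] at shift
  rw [← shift, expMean, integral_expMeasure_one, ← integral_const_mul]
  congr 1 with s
  rw [← mul_assoc, ← Real.exp_add, add_div, mul_div_cancel_left₀ t hκ]
  congr 2 <;> ring

lemma hasDerivAt_expMean (hκ : κ ≠ 0) (hf : Continuous f) (hfab : ∀ t, f t ∈ Icc a b) (t : ℝ) :
    HasDerivAt (expMean κ f) (κ * (expMean κ f t - f t)) t := by
  let g : ℝ → ℝ := fun r => Real.exp (-r) * f (r / κ)
  have hg : Continuous g := by fun_prop
  have hg_int (c : ℝ) : IntegrableOn g (Ioi c) :=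
    (integrableOn_exp_neg_Ioi c).mul_bdd (c := max |a| |b|)
      (by fun_prop) (.of_forall fun r => abs_le_max_abs_abs (hfab _).1 (hfab _).2)
  have linear : HasDerivAt (fun s => κ * s) κ t := by
    simpa using (hasDerivAt_id t).const_mul κ
  have tail : HasDerivAt (fun s => ∫ r in Ioi (κ * s), g r) (-g (κ * t) * κ) t :=
    (hasDerivAt_integral_Ioi hg hg_int (κ * t)).comp t linear
  have exp_mul_g : Real.exp (κ * t) * g (κ * t) = f t := by
    simp only [g]
    rw [← mul_assoc, ← Real.exp_add, add_neg_cancel, Real.exp_zero, one_mul,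
      mul_div_cancel_left₀ t hκ]
  rw [funext (expMean_eq_exp_mul_integral_Ioi hκ f)]
  refine (linear.exp.mul tail).congr_deriv ?_
  linear_combination -κ * exp_mul_g

lemma continuous_expMean (hκ : κ ≠ 0) (hf : Continuous f) (hfab : ∀ t, f t ∈ Icc a b) :
    Continuous (expMean κ f) :=
  continuous_iff_continuousAt.2 fun t => (hasDerivAt_expMean hκ hf hfab t).continuousAt

end ExpMean

section DampedResponse

variable {μ ν a b : ℝ} {f g : ℝ → ℝ}

/-- The bounded solution `u` of `u'' = -(ν - μ) u' + μ ν (u - f)` for bounded continuous `f`,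
obtained from the factorization `(ν + d/dt) (μ - d/dt) u = μ ν f`. -/
noncomputable def dampedResponse (μ ν : ℝ) (f : ℝ → ℝ) : ℝ → ℝ :=
  expMean (-ν) (expMean μ f)

/-- The velocity of `dampedResponse μ ν f`. -/
noncomputable def dampedVelocity (μ ν : ℝ) (f : ℝ → ℝ) (t : ℝ) : ℝ :=
  ν * (expMean μ f t - dampedResponse μ ν f t)

lemma dampedResponse_const (μ ν c t : ℝ) : dampedResponse μ ν (fun _ => c) t = c := by
  rw [dampedResponse, funext (expMean_const μ c), expMean_const]

lemma periodic_dampedResponse {T : ℝ} (hf : f.Periodic T) : (dampedResponse μ ν f).Periodic T :=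
  periodic_expMean (periodic_expMean hf)

lemma periodic_dampedVelocity {T : ℝ} (hf : f.Periodic T) : (dampedVelocity μ ν f).Periodic T :=
  fun t => by rw [dampedVelocity, periodic_expMean hf, periodic_dampedResponse hf, dampedVelocity]

lemma dampedResponse_mem_Icc (hμ : μ ≠ 0) (hf : Continuous f) (hfab : ∀ t, f t ∈ Icc a b) (t : ℝ) :
    dampedResponse μ ν f t ∈ Icc a b :=
  expMean_mem_Icc (continuous_expMean hμ hf hfab) (expMean_mem_Icc hf hfab) t

lemma dampedResponse_mono (hμ : μ ≠ 0) (hf : Continuous f) (hg : Continuous g)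
    (hfab : ∀ t, f t ∈ Icc a b) (hgab : ∀ t, g t ∈ Icc a b) (hfg : ∀ t, f t ≤ g t) (t : ℝ) :
    dampedResponse μ ν f t ≤ dampedResponse μ ν g t :=
  expMean_mono (continuous_expMean hμ hf hfab) (continuous_expMean hμ hg hgab)
    (expMean_mem_Icc hf hfab) (expMean_mem_Icc hg hgab) (expMean_mono hf hg hfab hgab hfg) t

lemma dampedResponse_lt_dampedResponse (hμ : μ ≠ 0) (hf : Continuous f) (hg : Continuous g)
    (hfab : ∀ t, f t ∈ Icc a b) (hgab : ∀ t, g t ∈ Icc a b) (hfg : ∀ t, f t < g t) (t : ℝ) :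
    dampedResponse μ ν f t < dampedResponse μ ν g t :=
  expMean_lt_expMean (continuous_expMean hμ hf hfab) (continuous_expMean hμ hg hgab)
    (expMean_mem_Icc hf hfab) (expMean_mem_Icc hg hgab) (expMean_lt_expMean hf hg hfab hgab hfg) t

lemma hasDerivAt_dampedResponse (hμ : μ ≠ 0) (hν : ν ≠ 0) (hf : Continuous f)
    (hfab : ∀ t, f t ∈ Icc a b) (t : ℝ) :
    HasDerivAt (dampedResponse μ ν f) (dampedVelocity μ ν f t) t :=
  (hasDerivAt_expMean (neg_ne_zero.2 hν) (continuous_expMean hμ hf hfab)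
    (expMean_mem_Icc hf hfab) t).congr_deriv (by rw [dampedVelocity, dampedResponse]; ring)

lemma hasDerivAt_dampedVelocity (hμ : μ ≠ 0) (hν : ν ≠ 0) (hf : Continuous f)
    (hfab : ∀ t, f t ∈ Icc a b) (t : ℝ) :
    HasDerivAt (dampedVelocity μ ν f)
      (-(ν - μ) * dampedVelocity μ ν f t + μ * ν * (dampedResponse μ ν f t - f t)) t :=
  (((hasDerivAt_expMean hμ hf hfab t).sub
    (hasDerivAt_dampedResponse hμ hν hf hfab t)).const_mul ν).congr_deriv
      (by rw [dampedVelocity]; ring)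

lemma lipschitzWith_dampedResponse (hμ : μ ≠ 0) (hν : 0 < ν) (hf : Continuous f)
    (hfab : ∀ t, f t ∈ Icc a b) :
    LipschitzWith (ν * (b - a)).toNNReal (dampedResponse μ ν f) := by
  have hderiv := hasDerivAt_dampedResponse hμ hν.ne' hf hfab
  refine lipschitzWith_of_nnnorm_deriv_le (fun t => (hderiv t).differentiableAt) fun t => ?_
  have width_nonneg : 0 ≤ ν * (b - a) :=
    mul_nonneg hν.le (sub_nonneg.2 ((hfab t).1.trans (hfab t).2))
  rw [← NNReal.coe_le_coe, coe_nnnorm, Real.coe_toNNReal _ width_nonneg, (hderiv t).deriv,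
    Real.norm_eq_abs, dampedVelocity, abs_mul, abs_of_pos hν]
  have hmean := expMean_mem_Icc (κ := μ) hf hfab t
  have hresponse := dampedResponse_mem_Icc (ν := ν) hμ hf hfab t
  gcongr
  exact abs_sub_le_of_le_of_le hmean.1 hmean.2 hresponse.1 hresponse.2

end DampedResponse

section MonotoneFixedPoint

theorem exists_isFixedPt_of_monotoneOn {P : Type*} [ConditionallyCompleteLattice P] {X : Set P}
    {Φ : P → P} (hsup : ∀ S ⊆ X, S.Nonempty → sSup S ∈ X) (hbdd : BddAbove X)
    (hmaps : MapsTo Φ X X) (hmono : MonotoneOn Φ X) {x₀ : P} (hx₀ : x₀ ∈ X) (hle : x₀ ≤ Φ x₀) :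
    ∃ x ∈ X, Function.IsFixedPt Φ x := by
  let S : Set P := {x ∈ X | x ≤ Φ x}
  have hS : S ⊆ X := sep_subset _ _
  have hmem : sSup S ∈ X := hsup S hS ⟨x₀, hx₀, hle⟩
  have le_sSup {x : P} (hx : x ∈ S) : x ≤ sSup S := le_csSup (hbdd.mono hS) hx
  have sSup_le_map : sSup S ≤ Φ (sSup S) :=
    csSup_le ⟨x₀, hx₀, hle⟩ fun x hx => hx.2.trans (hmono hx.1 hmem (le_sSup hx))
  have map_sSup_mem : Φ (sSup S) ∈ S := ⟨hmaps hmem, hmono hmem (hmaps hmem) sSup_le_map⟩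
  exact ⟨sSup S, hmem, (le_sSup map_sSup_mem).antisymm sSup_le_map⟩

variable {ι : Type*} {α β : ι → ℝ} {T μ ν : ℝ} {C : ι → NNReal}

/-- The `T`-periodic trajectories in the box `[α, β]` whose `i`-th coordinate is `C i`-Lipschitz.
The Lipschitz bounds make the set closed under pointwise suprema of families of continuous
trajectories. -/
def boxTrajectories (α β : ι → ℝ) (T : ℝ) (C : ι → NNReal) : Set (ℝ → ι → ℝ) :=
  {u | (∀ t, u t ∈ Icc α β) ∧ u.Periodic T ∧ ∀ i, LipschitzWith (C i) fun t => u t i}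

lemma bddAbove_boxTrajectories : BddAbove (boxTrajectories α β T C) :=
  ⟨fun _ => β, fun _ hu t => (hu.1 t).2⟩

lemma continuous_of_mem_boxTrajectories {u : ℝ → ι → ℝ} (hu : u ∈ boxTrajectories α β T C) :
    Continuous u :=
  continuous_pi fun i => (hu.2.2 i).continuous

lemma sSup_mem_boxTrajectories {S : Set (ℝ → ι → ℝ)} (hS : S ⊆ boxTrajectories α β T C)
    (hne : S.Nonempty) : sSup S ∈ boxTrajectories α β T C := by
  have hbdd : BddAbove S := bddAbove_boxTrajectories.mono hS
  have le_sSup {u : ℝ → ι → ℝ} (hu : u ∈ S) : u ≤ sSup S := le_csSup hbdd hu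
  obtain ⟨u₀, hu₀⟩ := hne
  have : Nonempty S := ⟨⟨u₀, hu₀⟩⟩
  have apply_eq_iSup (t : ℝ) (i : ι) : sSup S t i = ⨆ u : S, u.1 t i := by
    rw [sSup_apply, iSup_apply]
  refine ⟨fun t => ⟨((hS hu₀).1 t).1.trans (le_sSup hu₀ t), fun i => ?_⟩, fun t => ?_,
    fun i => LipschitzWith.of_le_add_mul _ fun s t => ?_⟩
  · rw [apply_eq_iSup]
    exact ciSup_le fun u => ((hS u.2).1 t).2 i
  · rw [sSup_apply, sSup_apply]
    exact iSup_congr fun u => (hS u.2).2.1 t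
  · rw [apply_eq_iSup]
    refine ciSup_le fun u => (((hS u.2).2.2 i).le_add_mul s t).trans ?_
    gcongr
    exact le_sSup u.2 t i

end MonotoneFixedPoint

section BoxDynamics

variable {ι : Type*} {α β : ι → ℝ} {T μ ν : ℝ} {f : ℝ → (ι → ℝ) → ι → ℝ}

/-- The operator whose fixed points are the bounded solutions of
`u'' = -(ν - μ) u' + μ ν (u - f(t, u))`. -/
noncomputable def responseOperator (μ ν : ℝ) (f : ℝ → (ι → ℝ) → ι → ℝ) (u : ℝ → ι → ℝ) :
    ℝ → ι → ℝ :=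
  fun t i => dampedResponse μ ν (fun s => f s (u s) i) t

lemma continuous_apply_along (hf : Continuous (Function.uncurry f)) {u : ℝ → ι → ℝ}
    (hu : Continuous u) (i : ι) : Continuous fun t => f t (u t) i :=
  (continuous_apply i).comp (hf.comp (continuous_id.prodMk hu))

lemma periodic_apply_along (hf : f.Periodic T) {u : ℝ → ι → ℝ} (hu : u.Periodic T) (i : ι) :
    Function.Periodic (fun t => f t (u t) i) T := fun t => by
  simp only [hf t, hu t]

lemma apply_along_mem_Icc (hmaps : ∀ t, MapsTo (f t) (Icc α β) (Icc α β)) {u : ℝ → ι → ℝ}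
    (hu : ∀ t, u t ∈ Icc α β) (i : ι) (t : ℝ) : f t (u t) i ∈ Icc (α i) (β i) :=
  ⟨(hmaps t (hu t)).1 i, (hmaps t (hu t)).2 i⟩

lemma mapsTo_responseOperator (hμ : μ ≠ 0) (hν : 0 < ν) (hf : Continuous (Function.uncurry f))
    (hper : f.Periodic T) (hmaps : ∀ t, MapsTo (f t) (Icc α β) (Icc α β)) :
    MapsTo (responseOperator μ ν f) (boxTrajectories α β T fun i => (ν * (β i - α i)).toNNReal)
      (boxTrajectories α β T fun i => (ν * (β i - α i)).toNNReal) := fun u hu => by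
  have hcont := continuous_apply_along hf (continuous_of_mem_boxTrajectories hu)
  have hbox := apply_along_mem_Icc hmaps hu.1
  exact ⟨fun t => ⟨fun i => (dampedResponse_mem_Icc hμ (hcont i) (hbox i) t).1,
      fun i => (dampedResponse_mem_Icc hμ (hcont i) (hbox i) t).2⟩,
    fun t => funext fun i => periodic_dampedResponse (periodic_apply_along hper hu.2.1 i) t,
    fun i => lipschitzWith_dampedResponse hμ hν (hcont i) (hbox i)⟩

lemma monotoneOn_responseOperator {C : ι → NNReal} (hμ : μ ≠ 0)
    (hf : Continuous (Function.uncurry f)) (hmaps : ∀ t, MapsTo (f t) (Icc α β) (Icc α β))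
    (hmono : ∀ t, MonotoneOn (f t) (Icc α β)) :
    MonotoneOn (responseOperator μ ν f) (boxTrajectories α β T C) :=
  fun _ hu _ hw huw t i => dampedResponse_mono hμ
    (continuous_apply_along hf (continuous_of_mem_boxTrajectories hu) i)
    (continuous_apply_along hf (continuous_of_mem_boxTrajectories hw) i)
    (apply_along_mem_Icc hmaps hu.1 i) (apply_along_mem_Icc hmaps hw.1 i)
    (fun s => hmono s (hu.1 s) (hw.1 s) (huw s) i) t

theorem exists_isFixedPt_responseOperator (hμ : μ ≠ 0) (hν : 0 < ν) (hαβ : α ≤ β)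
    (hf : Continuous (Function.uncurry f)) (hper : f.Periodic T)
    (hmaps : ∀ t, MapsTo (f t) (Icc α β) (Icc α β)) (hmono : ∀ t, MonotoneOn (f t) (Icc α β)) :
    ∃ u : ℝ → ι → ℝ, Continuous u ∧ u.Periodic T ∧ (∀ t, u t ∈ Icc α β) ∧
      Function.IsFixedPt (responseOperator μ ν f) u := by
  have hmapsTo := mapsTo_responseOperator hμ hν hf hper hmaps
  have const_mem : (fun _ => α) ∈ boxTrajectories α β T fun i => (ν * (β i - α i)).toNNReal :=
    ⟨fun _ => left_mem_Icc.2 hαβ, fun _ => rfl, fun i => LipschitzWith.const' (α i)⟩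
  obtain ⟨u, hu, hfix⟩ := exists_isFixedPt_of_monotoneOn (fun _ => sSup_mem_boxTrajectories)
    bddAbove_boxTrajectories hmapsTo (monotoneOn_responseOperator hμ hf hmaps hmono) const_mem
    fun t => ((hmapsTo const_mem).1 t).1
  exact ⟨u, continuous_of_mem_boxTrajectories hu, hu.2.1, hu.1, hfix⟩

lemma lt_of_isFixedPt_responseOperator (hμ : μ ≠ 0) (hf : Continuous (Function.uncurry f))
    (hmaps : ∀ t, MapsTo (f t) (Icc α β) (Icc α β)) (hmono : ∀ t, MonotoneOn (f t) (Icc α β))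
    {u : ℝ → ι → ℝ} (hu : Continuous u) (hbox : ∀ t, u t ∈ Icc α β)
    (hfix : Function.IsFixedPt (responseOperator μ ν f) u) {i : ι} (hα : ∀ t, α i < f t α i)
    (t : ℝ) : α i < u t i := by
  have hαβ : α ≤ β := (hbox t).1.trans (hbox t).2
  have lower_lt (s : ℝ) : α i < f s (u s) i :=
    (hα s).trans_le (hmono s (left_mem_Icc.2 hαβ) (hbox s) (hbox s).1 i)
  calc α i = dampedResponse μ ν (fun _ => α i) t := (dampedResponse_const μ ν (α i) t).symm
    _ < dampedResponse μ ν (fun s => f s (u s) i) t :=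
      dampedResponse_lt_dampedResponse hμ continuous_const (continuous_apply_along hf hu i)
        (fun _ => left_mem_Icc.2 (hαβ i)) (apply_along_mem_Icc hmaps hbox i) lower_lt t
    _ = u t i := congr_fun₂ hfix t i

lemma gt_of_isFixedPt_responseOperator (hμ : μ ≠ 0) (hf : Continuous (Function.uncurry f))
    (hmaps : ∀ t, MapsTo (f t) (Icc α β) (Icc α β)) (hmono : ∀ t, MonotoneOn (f t) (Icc α β))
    {u : ℝ → ι → ℝ} (hu : Continuous u) (hbox : ∀ t, u t ∈ Icc α β)
    (hfix : Function.IsFixedPt (responseOperator μ ν f) u) {i : ι} (hβ : ∀ t, f t β i < β i)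
    (t : ℝ) : u t i < β i := by
  have hαβ : α ≤ β := (hbox t).1.trans (hbox t).2
  have lt_upper (s : ℝ) : f s (u s) i < β i :=
    (hmono s (hbox s) (right_mem_Icc.2 hαβ) (hbox s).2 i).trans_lt (hβ s)
  calc u t i = dampedResponse μ ν (fun s => f s (u s) i) t := (congr_fun₂ hfix t i).symm
    _ < dampedResponse μ ν (fun _ => β i) t :=
      dampedResponse_lt_dampedResponse hμ (continuous_apply_along hf hu i) continuous_const
        (apply_along_mem_Icc hmaps hbox i) (fun _ => right_mem_Icc.2 (hαβ i)) lt_upper t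
    _ = β i := dampedResponse_const μ ν (β i) t

end BoxDynamics

section CompetitiveSystems

variable {ι : Type*} {α β : ι → ℝ} {κ K T : ℝ} {G : ℝ → (ι → ℝ) → ι → ℝ}

/-- Each `G i` increases at most at rate `K` in the `i`-th coordinate and does not increase in the
other coordinates; both conditions are expressed by one estimate along ordered pairs of points of
the box `[α, β]`. -/
def IsCompetitiveOn (K : ℝ) (G : (ι → ℝ) → ι → ℝ) (α β : ι → ℝ) : Prop :=
  ∀ ⦃u⦄, u ∈ Icc α β → ∀ ⦃w⦄, w ∈ Icc α β → u ≤ w → ∀ i, G w i - G u i ≤ K * (w i - u i)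

/-- The field `u - G(t, u) / κ`, which turns the force `G` into the form `κ (u - f(t, u))` solved
by `responseOperator`. -/
noncomputable def relaxation (κ : ℝ) (G : ℝ → (ι → ℝ) → ι → ℝ) (t : ℝ) (u : ι → ℝ) (i : ι) : ℝ :=
  u i - G t u i / κ

lemma continuous_relaxation (hG : Continuous (Function.uncurry G)) :
    Continuous (Function.uncurry (relaxation κ G)) :=
  continuous_pi fun i => ((continuous_apply i).comp continuous_snd).sub
    (((continuous_apply i).comp hG).div_const κ)

lemma periodic_relaxation (hG : G.Periodic T) : (relaxation κ G).Periodic T := fun t => by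
  funext u i
  rw [relaxation, hG t, relaxation]

lemma monotoneOn_relaxation (hκ : 0 < κ) (hK : K ≤ κ) {t : ℝ}
    (hG : IsCompetitiveOn K (G t) α β) : MonotoneOn (relaxation κ G t) (Icc α β) := by
  intro u hu w hw huw i
  have growth : G t w i - G t u i ≤ κ * (w i - u i) :=
    (hG hu hw huw i).trans (mul_le_mul_of_nonneg_right hK (sub_nonneg.2 (huw i)))
  have scaled : G t w i / κ - G t u i / κ ≤ w i - u i := by
    rw [← sub_div, div_le_iff₀' hκ]
    exact growth
  simp only [relaxation]
  linarith

lemma mapsTo_relaxation (hκ : 0 < κ) (hK : K ≤ κ) {t : ℝ} (hG : IsCompetitiveOn K (G t) α β)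
    (hα : G t α ≤ 0) (hβ : 0 ≤ G t β) : MapsTo (relaxation κ G t) (Icc α β) (Icc α β) := by
  intro u hu
  have hαβ : α ≤ β := hu.1.trans hu.2
  have hmono := monotoneOn_relaxation hκ hK hG
  have lower : α ≤ relaxation κ G t α := fun i =>
    le_sub_self_iff _ |>.2 (div_nonpos_of_nonpos_of_nonneg (hα i) hκ.le)
  have upper : relaxation κ G t β ≤ β := fun i => sub_le_self _ (div_nonneg (hβ i) hκ.le)
  exact ⟨lower.trans (hmono (left_mem_Icc.2 hαβ) hu hu.1),
    (hmono hu (right_mem_Icc.2 hαβ) hu.2).trans upper⟩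

lemma exists_pos_sub_eq_le_mul (γ K : ℝ) : ∃ μ ν : ℝ, 0 < μ ∧ 0 < ν ∧ ν - μ = γ ∧ K ≤ μ * ν := by
  refine ⟨1 + |γ| + |K|, 1 + |γ| + |K| + γ, by positivity, ?_, by ring, ?_⟩
  · linarith [neg_abs_le γ, abs_nonneg K]
  · nlinarith [neg_abs_le γ, le_abs_self K, abs_nonneg γ, abs_nonneg K]

theorem exists_periodic_solution_mem_Icc (γ : ℝ) (hαβ : α ≤ β)
    (hG : Continuous (Function.uncurry G)) (hper : G.Periodic T)
    (hcomp : ∀ t, IsCompetitiveOn K (G t) α β) (hα : ∀ t, G t α ≤ 0) (hβ : ∀ t, 0 ≤ G t β) :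
    ∃ x v : ℝ → ι → ℝ,
      (∀ t i, HasDerivAt (fun s => x s i) (v t i) t ∧
        HasDerivAt (fun s => v s i) (-γ * v t i + G t (x t) i) t) ∧
      x.Periodic T ∧ v.Periodic T ∧ (∀ t, x t ∈ Icc α β) ∧
      (∀ i, (∀ t, G t α i < 0) → ∀ t, α i < x t i) ∧
      (∀ i, (∀ t, 0 < G t β i) → ∀ t, x t i < β i) := by
  obtain ⟨μ, ν, hμ, hν, rfl, hK⟩ := exists_pos_sub_eq_le_mul γ K
  have hκ : 0 < μ * ν := mul_pos hμ hν
  let f := relaxation (μ * ν) G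
  have hf : Continuous (Function.uncurry f) := continuous_relaxation hG
  have hfper : f.Periodic T := periodic_relaxation hper
  have hmono (t : ℝ) := monotoneOn_relaxation hκ hK (hcomp t)
  have hmaps (t : ℝ) := mapsTo_relaxation hκ hK (hcomp t) (hα t) (hβ t)
  obtain ⟨x, hx, hxper, hbox, hfix⟩ :=
    exists_isFixedPt_responseOperator hμ.ne' hν hαβ hf hfper hmaps hmono
  have hfx := continuous_apply_along hf hx
  have hfx_mem := apply_along_mem_Icc hmaps hbox
  have x_eq (i : ι) : (fun s => x s i) = dampedResponse μ ν fun s => f s (x s) i :=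
    funext fun t => (congr_fun₂ hfix t i).symm
  refine ⟨x, fun t i => dampedVelocity μ ν (fun s => f s (x s) i) t, fun t i => ⟨?_, ?_⟩, hxper,
    fun t => funext fun i => periodic_dampedVelocity (periodic_apply_along hfper hxper i) t, hbox,
    fun i hi => lt_of_isFixedPt_responseOperator hμ.ne' hf hmaps hmono hx hbox hfix
      fun t => lt_sub_comm.2 ((div_neg_of_neg_of_pos (hi t) hκ).trans_eq (sub_self _).symm),
    fun i hi => gt_of_isFixedPt_responseOperator hμ.ne' hf hmaps hmono hx hbox hfix
      fun t => sub_lt_self _ (div_pos (hi t) hκ)⟩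
  · rw [x_eq]
    exact hasDerivAt_dampedResponse hμ.ne' hν.ne' (hfx i) (hfx_mem i) t
  · refine (hasDerivAt_dampedVelocity hμ.ne' hν.ne' (hfx i) (hfx_mem i) t).congr_deriv ?_
    rw [← congr_fun (x_eq i) t]
    simp only [f, relaxation]
    field_simp
    ring

end CompetitiveSystems

section Chain

variable {n i : ℕ} {L t : ℝ} {g : ℝ → ℝ} {F : ℝ → ℝ → ℝ}

/-- The left ends `(2i - 1) L` of the intervals confining the particles `1, …, n`. Truncated
subtraction and the minimum give the positions `0` and `(2n + 1) L` of the boundary particles. -/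
def lowerBarrier (n : ℕ) (L : ℝ) (i : ℕ) : ℝ := (min (2 * i - 1) (2 * n + 1) : ℕ) * L

/-- The right ends `2i L` of the intervals confining the particles `1, …, n`, equal to
`lowerBarrier` at the boundary particles, which are thereby pinned. -/
def upperBarrier (n : ℕ) (L : ℝ) (i : ℕ) : ℝ := (min (2 * i) (2 * n + 1) : ℕ) * L

/-- The acceleration of particle `i` due to the interaction force `g` and the external field `F`;
it vanishes on the boundary particles, whose equations are thus trivial. -/
def chainForce (n : ℕ) (g : ℝ → ℝ) (F : ℝ → ℝ → ℝ) (t : ℝ) (u : ℕ → ℝ) (i : ℕ) : ℝ :=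
  if 1 ≤ i ∧ i ≤ n then -g (u i - u (i - 1)) + g (u (i + 1) - u i) + F t (u i) else 0

lemma continuous_chainForce (hg : Continuous g) (hF : Continuous (Function.uncurry F)) :
    Continuous (Function.uncurry (chainForce n g F)) := by
  refine continuous_pi fun i => ?_
  by_cases hi : 1 ≤ i ∧ i ≤ n
  · have field : Continuous fun p : ℝ × (ℕ → ℝ) => F p.1 (p.2 i) :=
      hF.comp (by fun_prop : Continuous fun p : ℝ × (ℕ → ℝ) => (p.1, p.2 i))
    simp only [Function.uncurry, chainForce, if_pos hi]
    exact (by fun_prop : Continuous fun p : ℝ × (ℕ → ℝ) =>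
      -g (p.2 i - p.2 (i - 1)) + g (p.2 (i + 1) - p.2 i)).add field
  · simp only [Function.uncurry, chainForce, if_neg hi]
    fun_prop

lemma periodic_chainForce {T : ℝ} (hF : F.Periodic T) : (chainForce n g F).Periodic T := fun t => by
  funext u i
  rw [chainForce, hF t, chainForce]

lemma lowerBarrier_le_upperBarrier (hL : 0 ≤ L) : lowerBarrier n L ≤ upperBarrier n L := fun i => by
  unfold lowerBarrier upperBarrier
  gcongr
  omega

lemma sub_mem_Icc_of_mem_barriers (hL : 0 ≤ L) {u : ℕ → ℝ}
    (hu : u ∈ Icc (lowerBarrier n L) (upperBarrier n L)) (hi : 1 ≤ i) (hin : i ≤ n + 1) :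
    u i - u (i - 1) ∈ Icc L (3 * L) := by
  have gap : upperBarrier n L (i - 1) + L ≤ lowerBarrier n L i := by
    have : min (2 * (i - 1)) (2 * n + 1) + 1 ≤ min (2 * i - 1) (2 * n + 1) := by omega
    rw [upperBarrier, lowerBarrier, ← add_one_mul]
    exact mul_le_mul_of_nonneg_right (mod_cast this) hL
  have spread : upperBarrier n L i ≤ lowerBarrier n L (i - 1) + 3 * L := by
    have : min (2 * i) (2 * n + 1) ≤ min (2 * (i - 1) - 1) (2 * n + 1) + 3 := by omega
    rw [upperBarrier, lowerBarrier, ← add_mul]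
    exact mul_le_mul_of_nonneg_right (mod_cast this) hL
  have left := hu.1 i
  have right := hu.2 i
  have left_pred := hu.1 (i - 1)
  have right_pred := hu.2 (i - 1)
  constructor <;> linarith

lemma mem_Icc_of_mem_barriers (hL : 0 ≤ L) {u : ℕ → ℝ}
    (hu : u ∈ Icc (lowerBarrier n L) (upperBarrier n L)) (i : ℕ) :
    u i ∈ Icc 0 ((2 * n + 1) * L) := by
  have last : ((min (2 * i) (2 * n + 1) : ℕ) : ℝ) ≤ 2 * n + 1 := by
    exact_mod_cast min_le_right (2 * i) (2 * n + 1)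
  exact ⟨le_trans (by unfold lowerBarrier; positivity) (hu.1 i),
    (hu.2 i).trans (mul_le_mul_of_nonneg_right last hL)⟩

lemma sub_le_mul_of_antitoneOn_of_lipschitzOnWith {s : Set ℝ} {C : NNReal} (hg : AntitoneOn g s)
    (hC : LipschitzOnWith C g s) {q r d : ℝ} (hq : q ∈ s) (hr : r ∈ s) (hd : 0 ≤ d)
    (hqr : q - r ≤ d) : g r - g q ≤ C * d := by
  rcases le_total q r with h | h
  · exact (sub_nonpos.2 (hg hq hr h)).trans (by positivity)
  · calc g r - g q ≤ C * dist r q := (le_abs_self _).trans (hC.dist_le_mul r hr q hq)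
      _ ≤ C * d := by
        rw [dist_comm, Real.dist_eq, abs_of_nonneg (sub_nonneg.2 h)]
        gcongr

lemma isCompetitiveOn_chainForce {C D : NNReal} (hL : 0 ≤ L) (hg : AntitoneOn g (Icc L (3 * L)))
    (hC : LipschitzOnWith C g (Icc L (3 * L)))
    (hD : LipschitzOnWith D (F t) (Icc 0 ((2 * n + 1) * L))) :
    IsCompetitiveOn (2 * C + D) (chainForce n g F t) (lowerBarrier n L) (upperBarrier n L) := by
  intro u hu w hw huw i
  have increment_nonneg : 0 ≤ w i - u i := sub_nonneg.2 (huw i)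
  by_cases hi : 1 ≤ i ∧ i ≤ n
  · have left_bond : g (u i - u (i - 1)) - g (w i - w (i - 1)) ≤ C * (w i - u i) :=
      sub_le_mul_of_antitoneOn_of_lipschitzOnWith hg hC
        (sub_mem_Icc_of_mem_barriers hL hw hi.1 (by omega))
        (sub_mem_Icc_of_mem_barriers hL hu hi.1 (by omega)) increment_nonneg
        (by linarith [huw (i - 1)])
    have right_bond : g (w (i + 1) - w i) - g (u (i + 1) - u i) ≤ C * (w i - u i) :=
      sub_le_mul_of_antitoneOn_of_lipschitzOnWith hg hC
        (sub_mem_Icc_of_mem_barriers (i := i + 1) hL hu (by omega) (by omega))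
        (sub_mem_Icc_of_mem_barriers (i := i + 1) hL hw (by omega) (by omega)) increment_nonneg
        (by linarith [huw (i + 1)])
    have field : F t (w i) - F t (u i) ≤ D * (w i - u i) := by
      have := hD.dist_le_mul (w i) (mem_Icc_of_mem_barriers hL hw i) (u i)
        (mem_Icc_of_mem_barriers hL hu i)
      rw [Real.dist_eq, Real.dist_eq, abs_of_nonneg increment_nonneg] at this
      exact (le_abs_self _).trans this
    simp only [chainForce, hi, and_self, if_true]
    linarith
  · simp only [chainForce, hi, if_false, sub_self]
    positivity

lemma chainForce_lowerBarrier_neg (hL : 0 ≤ L) (hg : AntitoneOn g (Icc L (3 * L))) (hi : 1 ≤ i)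
    (hin : i ≤ n) (hF : F t (lowerBarrier n L i) < 0) :
    chainForce n g F t (lowerBarrier n L) i < 0 := by
  have mem := left_mem_Icc.2 (lowerBarrier_le_upperBarrier (n := n) hL)
  have spacing : lowerBarrier n L i - lowerBarrier n L (i - 1) ≤
      lowerBarrier n L (i + 1) - lowerBarrier n L i := by
    have : min (2 * i - 1) (2 * n + 1) + min (2 * i - 1) (2 * n + 1) ≤
      min (2 * (i + 1) - 1) (2 * n + 1) + min (2 * (i - 1) - 1) (2 * n + 1) := by omega
    rw [sub_le_sub_iff]
    unfold lowerBarrier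
    rw [← add_mul, ← add_mul]
    exact mul_le_mul_of_nonneg_right (mod_cast this) hL
  have bonds := hg (sub_mem_Icc_of_mem_barriers hL mem hi (by omega))
    (sub_mem_Icc_of_mem_barriers (i := i + 1) hL mem (by omega) (by omega)) spacing
  rw [Nat.add_sub_cancel] at bonds
  rw [chainForce, if_pos ⟨hi, hin⟩]
  linarith

lemma chainForce_upperBarrier_pos (hL : 0 ≤ L) (hg : AntitoneOn g (Icc L (3 * L))) (hi : 1 ≤ i)
    (hin : i ≤ n) (hF : 0 < F t (upperBarrier n L i)) :
    0 < chainForce n g F t (upperBarrier n L) i := by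
  have mem := right_mem_Icc.2 (lowerBarrier_le_upperBarrier (n := n) hL)
  have spacing : upperBarrier n L (i + 1) - upperBarrier n L i ≤
      upperBarrier n L i - upperBarrier n L (i - 1) := by
    have : min (2 * (i + 1)) (2 * n + 1) + min (2 * (i - 1)) (2 * n + 1) ≤
      min (2 * i) (2 * n + 1) + min (2 * i) (2 * n + 1) := by omega
    rw [sub_le_sub_iff]
    unfold upperBarrier
    rw [← add_mul, ← add_mul]
    exact mul_le_mul_of_nonneg_right (mod_cast this) hL
  have bonds := hg (sub_mem_Icc_of_mem_barriers (i := i + 1) hL mem (by omega) (by omega))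
    (sub_mem_Icc_of_mem_barriers hL mem hi (by omega)) spacing
  rw [Nat.add_sub_cancel] at bonds
  rw [chainForce, if_pos ⟨hi, hin⟩]
  linarith

lemma chainForce_nonpos_of_interior {u : ℕ → ℝ}
    (h : ∀ i, 1 ≤ i → i ≤ n → chainForce n g F t u i ≤ 0) : chainForce n g F t u ≤ 0 := fun i => by
  by_cases hi : 1 ≤ i ∧ i ≤ n
  · exact h i hi.1 hi.2
  · exact (if_neg hi).le

lemma chainForce_nonneg_of_interior {u : ℕ → ℝ}
    (h : ∀ i, 1 ≤ i → i ≤ n → 0 ≤ chainForce n g F t u i) : 0 ≤ chainForce n g F t u := fun i => by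
  by_cases hi : 1 ≤ i ∧ i ≤ n
  · exact h i hi.1 hi.2
  · exact (if_neg hi).ge

lemma exists_lipschitzOnWith_of_periodic {T : ℝ} (hT : 0 < T)
    (hF : ContDiff ℝ 1 (Function.uncurry F)) (hper : F.Periodic T) (a b : ℝ) :
    ∃ C : NNReal, ∀ t, LipschitzOnWith C (F t) (Icc a b) := by
  obtain ⟨C, hC⟩ := hF.contDiffOn.exists_lipschitzOnWith (s := Icc 0 T ×ˢ Icc a b) one_ne_zero
    ((convex_Icc _ _).prod (convex_Icc _ _)) (isCompact_Icc.prod isCompact_Icc)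
  refine ⟨C, fun t => .of_dist_le_mul fun x hx y hy => ?_⟩
  obtain ⟨s, hs, hst⟩ := hper.exists_mem_Ico₀ hT t
  have hs' := Ico_subset_Icc_self hs
  simpa [hst] using hC.dist_le_mul (s, x) ⟨hs', hx⟩ (s, y) ⟨hs', hy⟩

lemma lowerBarrier_of_mem_Icc (hi : 1 ≤ i) (hin : i ≤ n) :
    lowerBarrier n L i = (2 * (i : ℝ) - 1) * L := by
  rw [lowerBarrier, min_eq_left (by omega), Nat.cast_sub (by omega)]
  push_cast
  rfl

lemma upperBarrier_of_le (hin : i ≤ n) : upperBarrier n L i = 2 * (i : ℝ) * L := by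
  rw [upperBarrier, min_eq_left (by omega)]
  push_cast
  rfl

lemma eq_zero_of_mem_barriers {u : ℕ → ℝ} (hu : u ∈ Icc (lowerBarrier n L) (upperBarrier n L)) :
    u 0 = 0 :=
  le_antisymm (by simpa [upperBarrier] using hu.2 0) (by simpa [lowerBarrier] using hu.1 0)

lemma eq_last_of_mem_barriers {u : ℕ → ℝ}
    (hu : u ∈ Icc (lowerBarrier n L) (upperBarrier n L)) : u (n + 1) = (2 * (n : ℝ) + 1) * L := by
  have lower : lowerBarrier n L (n + 1) = (2 * (n : ℝ) + 1) * L := by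
    rw [lowerBarrier, min_eq_right (by omega)]
    push_cast
    rfl
  have upper : upperBarrier n L (n + 1) = (2 * (n : ℝ) + 1) * L := by
    rw [upperBarrier, min_eq_right (by omega)]
    push_cast
    rfl
  exact le_antisymm (upper ▸ hu.2 _) (lower ▸ hu.1 _)

lemma neg_at_lowerBarrier_of_alternating
    (hF : ∀ k : ℕ, 1 ≤ k → k ≤ 2 * n → (-1 : ℝ) ^ (k + 1) * F t (k * L) < 0)
    (hi : 1 ≤ i) (hin : i ≤ n) : F t (lowerBarrier n L i) < 0 := by
  have even : Even (2 * i - 1 + 1) := ⟨i, by omega⟩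
  rw [lowerBarrier, min_eq_left (by omega)]
  simpa only [even.neg_one_pow, one_mul] using hF (2 * i - 1) (by omega) (by omega)

lemma pos_at_upperBarrier_of_alternating
    (hF : ∀ k : ℕ, 1 ≤ k → k ≤ 2 * n → (-1 : ℝ) ^ (k + 1) * F t (k * L) < 0)
    (hi : 1 ≤ i) (hin : i ≤ n) : 0 < F t (upperBarrier n L i) := by
  rw [upperBarrier, min_eq_left (by omega)]
  simpa only [(odd_two_mul_add_one i).neg_one_pow, neg_one_mul, neg_lt_zero] using
    hF (2 * i) (by omega) (by omega)

end Chain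

section Morse

lemma hasDerivAt_morseV (δ x : ℝ) :
    HasDerivAt (morseV δ) ((1 - Real.exp (-(x - δ))) * Real.exp (-(x - δ))) x := by
  have exponent : HasDerivAt (fun y => -(y - δ)) (-1) x := ((hasDerivAt_id x).sub_const δ).neg
  refine (((exponent.exp.const_sub 1).pow 2).div_const 2).congr_deriv ?_
  push_cast
  ring

lemma contDiff_morseV (δ : ℝ) {m : WithTop ℕ∞} : ContDiff ℝ m (morseV δ) := by
  unfold morseV
  fun_prop

lemma antitoneOn_deriv_morseV (δ : ℝ) :
    AntitoneOn (deriv (morseV δ)) (Ici (δ + Real.log 2)) := by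
  intro x hx y _ hxy
  have exp_le : Real.exp (-(y - δ)) ≤ Real.exp (-(x - δ)) := by gcongr
  have exp_le_half : Real.exp (-(x - δ)) ≤ 1 / 2 :=
    calc Real.exp (-(x - δ)) ≤ Real.exp (-Real.log 2) := by
          gcongr
          exact le_sub_iff_add_le'.2 hx
      _ = 1 / 2 := by rw [Real.exp_neg, Real.exp_log two_pos, one_div]
  have one_sub_sum_nonneg : 0 ≤ 1 - (Real.exp (-(x - δ)) + Real.exp (-(y - δ))) := by linarith
  rw [(hasDerivAt_morseV δ x).deriv, (hasDerivAt_morseV δ y).deriv]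
  linarith [mul_nonneg (sub_nonneg.2 exp_le) one_sub_sum_nonneg]

lemma concaveOn_morseV (δ : ℝ) : ConcaveOn ℝ (Ici (δ + Real.log 2)) (morseV δ) :=
  ((antitoneOn_deriv_morseV δ).mono interior_subset).concaveOn_of_deriv (convex_Ici _)
    (contDiff_morseV δ (m := 1)).continuous.continuousOn
    ((contDiff_morseV δ).differentiable one_ne_zero).differentiableOn

end Morse

theorem oscillator_chain_periodic_solution_general
    (n : ℕ) (γ : ℝ) {L T : ℝ} (hL : 0 ≤ L) (hT : 0 < T)
    {V : ℝ → ℝ} (hV : ContDiff ℝ 2 V) (hVconc : ConcaveOn ℝ (Icc L (3 * L)) V)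
    {F : ℝ → ℝ → ℝ} (hF : ContDiff ℝ 1 (fun u : ℝ × ℝ => F u.1 u.2))
    (hFper : ∀ t x, F (t + T) x = F t x)
    (hcond : ∀ t : ℝ, ∀ k : ℕ, 1 ≤ k → k ≤ 2 * n →
      (-1 : ℝ) ^ (k + 1) * F t ((k : ℝ) * L) < 0) :
    ∃ x v : ℝ → ℕ → ℝ,
      (∀ t, x t 0 = 0) ∧
      (∀ t, x t (n + 1) = (2 * (n : ℝ) + 1) * L) ∧
      (∀ t : ℝ, ∀ i : ℕ, 1 ≤ i → i ≤ n →
        HasDerivAt (fun s => x s i) (v t i) t ∧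
        HasDerivAt (fun s => v s i)
          (-γ * v t i - deriv V (x t i - x t (i - 1))
            + deriv V (x t (i + 1) - x t i) + F t (x t i)) t) ∧
      (∀ t : ℝ, ∀ i : ℕ, 1 ≤ i → i ≤ n → x (t + T) i = x t i ∧ v (t + T) i = v t i) ∧
      (∀ t : ℝ, ∀ i : ℕ, 1 ≤ i → i ≤ n →
        (2 * (i : ℝ) - 1) * L < x t i ∧ x t i < 2 * (i : ℝ) * L) := by
  have deriv_smooth : ContDiff ℝ 1 (deriv V) := hV.deriv'
  have hper : F.Periodic T := fun t => funext (hFper t)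
  have hanti : AntitoneOn (deriv V) (Icc L (3 * L)) :=
    hVconc.antitoneOn_deriv fun x _ => (hV.differentiable two_ne_zero) x
  obtain ⟨C, hC⟩ := deriv_smooth.contDiffOn.exists_lipschitzOnWith one_ne_zero
    (convex_Icc L (3 * L)) isCompact_Icc
  obtain ⟨D, hD⟩ := exists_lipschitzOnWith_of_periodic hT hF hper 0 ((2 * n + 1) * L)
  have hneg (t : ℝ) (i : ℕ) (hi : 1 ≤ i) (hin : i ≤ n) :=
    chainForce_lowerBarrier_neg hL hanti hi hin
      (neg_at_lowerBarrier_of_alternating (hcond t) hi hin)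
  have hpos (t : ℝ) (i : ℕ) (hi : 1 ≤ i) (hin : i ≤ n) :=
    chainForce_upperBarrier_pos hL hanti hi hin
      (pos_at_upperBarrier_of_alternating (hcond t) hi hin)
  obtain ⟨x, v, hderiv, hx, hv, hbox, hlower, hupper⟩ := exists_periodic_solution_mem_Icc γ
    (lowerBarrier_le_upperBarrier hL) (continuous_chainForce deriv_smooth.continuous hF.continuous)
    (periodic_chainForce hper) (fun t => isCompetitiveOn_chainForce hL hanti hC (hD t))
    (fun t => chainForce_nonpos_of_interior fun i hi hin => (hneg t i hi hin).le)
    (fun t => chainForce_nonneg_of_interior fun i hi hin => (hpos t i hi hin).le)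
  refine ⟨x, v, fun t => eq_zero_of_mem_barriers (hbox t),
    fun t => eq_last_of_mem_barriers (hbox t),
    fun t i hi hin => ⟨(hderiv t i).1, (hderiv t i).2.congr_deriv ?_⟩,
    fun t i _ _ => ⟨congr_fun (hx t) i, congr_fun (hv t) i⟩, fun t i hi hin => ⟨?_, ?_⟩⟩
  · rw [chainForce, if_pos ⟨hi, hin⟩]
    ring
  · rw [← lowerBarrier_of_mem_Icc hi hin]
    exact hlower i (fun s => hneg s i hi hin) t
  · rw [← upperBarrier_of_le hin]
    exact hupper i (fun s => hpos s i hi hin) t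

theorem oscillator_chain_periodic_solution
    (n : ℕ) (hn : 1 ≤ n) (γ δ a T : ℝ)
    (hγ : 0 < γ) (hδ : 0 < δ) (ha : Real.log 2 ≤ a) (hT : 0 < T)
    (F : ℝ → ℝ → ℝ)
    (hF : ContDiff ℝ (⊤ : ℕ∞) (fun u : ℝ × ℝ => F u.1 u.2))
    (hFper : ∀ t x, F (t + T) x = F t x)
    -- (−1)^{k+1}·F(t, k(δ+a)) < 0 for all t and k = 1,…,2n
    (hcond : ∀ t : ℝ, ∀ k : ℕ, 1 ≤ k → k ≤ 2 * n →
      (-1 : ℝ) ^ (k + 1) * F t ((k : ℝ) * (δ + a)) < 0) :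
    ∃ x v : ℝ → ℕ → ℝ,
      -- fixed boundary particles
      (∀ t, x t 0 = 0) ∧
      (∀ t, x t (n + 1) = (2 * (n : ℝ) + 1) * (δ + a)) ∧
      -- the equations of motion for i = 1,…,n
      (∀ t : ℝ, ∀ i : ℕ, 1 ≤ i → i ≤ n →
        HasDerivAt (fun s => x s i) (v t i) t ∧
        HasDerivAt (fun s => v s i)
          (-γ * v t i - deriv (morseV δ) (x t i - x t (i - 1))
            + deriv (morseV δ) (x t (i + 1) - x t i) + F t (x t i)) t) ∧
      -- T-periodicity
      (∀ t : ℝ, ∀ i : ℕ, 1 ≤ i → i ≤ n → x (t + T) i = x t i ∧ v (t + T) i = v t i) ∧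
      -- localization
      (∀ t : ℝ, ∀ i : ℕ, 1 ≤ i → i ≤ n →
        (2 * (i : ℝ) - 1) * (δ + a) < x t i ∧ x t i < 2 * (i : ℝ) * (δ + a)) := by
  have hL : δ + Real.log 2 ≤ δ + a := by gcongr
  exact oscillator_chain_periodic_solution_general n γ
    (add_pos hδ ((Real.log_pos one_lt_two).trans_le ha)).le hT (contDiff_morseV δ)
    ((concaveOn_morseV δ).subset (fun x hx => hL.trans hx.1) (convex_Icc _ _))
    (hF.of_le (mod_cast le_top)) hFper hcond
end
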